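/- arXiv:1209.0068 — 13 statements merged into one kernel-verified Lean document; each statement's English description precedes it below -/
import Mathlib

section
/- Let M, M' be m×p real matrices of rank p and N, N' be n×p real matrices of rank p. Then M Nᵀ = M' N'ᵀ if and only if there exists an invertible p×p real matrix R such that M' = M R and N' = N R⁻ᵀ. Consequently, the fiber of the map π(M,N) = M Nᵀ over M Nᵀ is { (M R, N R⁻ᵀ) : R ∈ GL(p) }. -/
open Matrix

/-!
A left inverse `L` of `M` and a right inverse `K` of `P` turn `M * P = M' * P'` into
`(L * M') * (P' * K) = 1`. Hence `R = L * M'` is invertible with inverse `P' * K`; cancelling the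
factors one at a time gives `M' = M * R` and `P = R * P'`. Over a field, full column rank supplies
the one-sided inverses.
-/

section CommRing

variable {m n p : Type*} [Fintype p] [DecidableEq p] {A : Type*} [CommRing A]

theorem rank_mul_eq_left_of_isUnit (M : Matrix m p A) {R : Matrix p p A} (hR : IsUnit R) :
    (M * R).rank = M.rank :=
  rank_mul_eq_left_of_isUnit_det R M ((isUnit_iff_isUnit_det R).mp hR)

variable [Fintype m] [Fintype n]

theorem matrix_mul_eq_mul_iff_exists_isUnit {M M' : Matrix m p A} {P P' : Matrix p n A}
    (hM : ∃ L : Matrix p m A, L * M = 1) (hP : ∃ K : Matrix n p A, P * K = 1) :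
    M * P = M' * P' ↔ ∃ R : Matrix p p A, IsUnit R ∧ M' = M * R ∧ P' = R⁻¹ * P := by
  constructor
  · intro h
    obtain ⟨L, hL⟩ := hM
    obtain ⟨K, hK⟩ := hP
    have hPR : P = L * M' * P' := by
      rw [Matrix.mul_assoc, ← h, ← Matrix.mul_assoc, hL, Matrix.one_mul]
    have hMS : M = M' * (P' * K) := by
      rw [← Matrix.mul_assoc, ← h, Matrix.mul_assoc, hK, Matrix.mul_one]
    have hRS : L * M' * (P' * K) = 1 := by
      rw [Matrix.mul_assoc, ← hMS, hL]
    have hdet : IsUnit (L * M').det := isUnit_det_of_right_inverse hRS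
    refine ⟨L * M', (isUnit_iff_isUnit_det _).mpr hdet, ?_, ?_⟩
    · calc
        M' = M' * (P' * K * (L * M')) := by rw [mul_eq_one_comm.mp hRS, Matrix.mul_one]
        _ = M * (L * M') := by rw [← Matrix.mul_assoc, ← hMS]
    · calc
        P' = (L * M')⁻¹ * (L * M' * P') := (nonsing_inv_mul_cancel_left _ _ hdet).symm
        _ = (L * M')⁻¹ * P := by rw [← hPR]
  · rintro ⟨R, hR, rfl, rfl⟩
    rw [Matrix.mul_assoc, mul_nonsing_inv_cancel_left _ _ ((isUnit_iff_isUnit_det _).mp hR)]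

theorem mul_transpose_eq_mul_transpose_iff_exists_isUnit
    {M M' : Matrix m p A} {N N' : Matrix n p A}
    (hM : ∃ L : Matrix p m A, L * M = 1) (hN : ∃ K : Matrix p n A, K * N = 1) :
    M * Nᵀ = M' * N'ᵀ ↔ ∃ R : Matrix p p A, IsUnit R ∧ M' = M * R ∧ N' = N * (R⁻¹)ᵀ := by
  have hNt : ∃ K : Matrix n p A, Nᵀ * K = 1 := by
    obtain ⟨K, hK⟩ := hN
    exact ⟨Kᵀ, by rw [← transpose_mul, hK, transpose_one]⟩
  have transpose_factor (R : Matrix p p A) : N'ᵀ = R⁻¹ * Nᵀ ↔ N' = N * (R⁻¹)ᵀ := by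
    rw [← transpose_inj, transpose_transpose, transpose_mul, transpose_transpose]
  simp only [matrix_mul_eq_mul_iff_exists_isUnit hM hNt, transpose_factor]

end CommRing

section Field

variable {m n p : Type*} [Fintype p] [DecidableEq p] {K : Type*} [Field K]

theorem exists_left_inverse_of_rank_eq_card [Fintype m] {M : Matrix m p K}
    (hM : M.rank = Fintype.card p) :
    ∃ L : Matrix p m K, L * M = 1 := by
  have range_eq_top : LinearMap.range Mᵀ.mulVecLin = ⊤ := by
    apply Submodule.eq_top_of_finrank_eq
    rw [Module.finrank_fintype_fun_eq_card, ← hM, ← rank_transpose M, Matrix.rank]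
  rw [← vecMul_surjective_iff_exists_left_inverse]
  simpa only [coe_mulVecLin, funext (mulVec_transpose M)] using
    LinearMap.range_eq_top.mp range_eq_top

theorem fiber_GL_general [Finite m] [Finite n] {M : Matrix m p K} {N : Matrix n p K}
    (hM : M.rank = Fintype.card p) (hN : N.rank = Fintype.card p)
    (M' : Matrix m p K) (N' : Matrix n p K) :
    (M * Nᵀ = M' * N'ᵀ ↔ ∃ R : Matrix p p K, IsUnit R ∧ M' = M * R ∧ N' = N * (R⁻¹)ᵀ) ∧
    {q : Matrix m p K × Matrix n p K |
        q.1.rank = Fintype.card p ∧ q.2.rank = Fintype.card p ∧ q.1 * q.2ᵀ = M * Nᵀ} =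
      {q : Matrix m p K × Matrix n p K |
        ∃ R : Matrix p p K, IsUnit R ∧ q.1 = M * R ∧ q.2 = N * (R⁻¹)ᵀ} := by
  have := Fintype.ofFinite m
  have := Fintype.ofFinite n
  have same_product_iff (M' : Matrix m p K) (N' : Matrix n p K) :=
    mul_transpose_eq_mul_transpose_iff_exists_isUnit (M' := M') (N' := N')
      (exists_left_inverse_of_rank_eq_card hM) (exists_left_inverse_of_rank_eq_card hN)
  refine ⟨same_product_iff M' N', ?_⟩
  ext ⟨X, Y⟩
  simp only [Set.mem_ofPred_eq, eq_comm (b := M * Nᵀ), same_product_iff]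
  refine ⟨fun h ↦ h.2.2, fun h ↦ ⟨?_, ?_, h⟩⟩ <;> obtain ⟨R, hR, rfl, rfl⟩ := h
  · rw [rank_mul_eq_left_of_isUnit M hR, hM]
  · have hRinv : IsUnit (R⁻¹)ᵀ := by rwa [isUnit_transpose, isUnit_nonsing_inv_iff]
    rw [rank_mul_eq_left_of_isUnit N hRinv, hN]

end Field

/-- M Nᵀ = M' N'ᵀ iff M' = M R and N' = N R⁻ᵀ for some invertible R; consequently
the fiber of π(M,N) = M Nᵀ over M Nᵀ is { (M R, N R⁻ᵀ) : R ∈ GL(p) }. -/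
theorem fiber_GL (m n p : ℕ) (hp : 0 < p) (hpm : p ≤ m) (hpn : p ≤ n)
    (M M' : Matrix (Fin m) (Fin p) ℝ) (N N' : Matrix (Fin n) (Fin p) ℝ)
    (hM : M.rank = p) (hM' : M'.rank = p) (hN : N.rank = p) (hN' : N'.rank = p) :
    (M * Nᵀ = M' * N'ᵀ ↔
      ∃ R : Matrix (Fin p) (Fin p) ℝ, IsUnit R ∧ M' = M * R ∧ N' = N * (R⁻¹)ᵀ) ∧
    {q : Matrix (Fin m) (Fin p) ℝ × Matrix (Fin n) (Fin p) ℝ |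
        q.1.rank = p ∧ q.2.rank = p ∧ q.1 * q.2ᵀ = M * Nᵀ} =
      {q : Matrix (Fin m) (Fin p) ℝ × Matrix (Fin n) (Fin p) ℝ |
        ∃ R : Matrix (Fin p) (Fin p) ℝ, IsUnit R ∧ q.1 = M * R ∧ q.2 = N * (R⁻¹)ᵀ} := by
  simpa only [Fintype.card_fin] using fiber_GL_general (hM.trans (Fintype.card_fin p).symm)
    (hN.trans (Fintype.card_fin p).symm) M' N'
end

section
/- Let M, M' be m×p real matrices with orthonormal columns (MᵀM = M'ᵀM' = I_p) and let N, N' be n×p real matrices of rank p. Then M Nᵀ = M' N'ᵀ if and only if there exists an orthogonal p×p real matrix R (RᵀR = I_p) such that M' = M R and N' = N R. Consequently, the fiber of the map π(M,N) = M Nᵀ over M Nᵀ is { (M R, N R) : R ∈ O(p) }. -/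
open Matrix

/-!
If `M` and `M'` have orthonormal columns and `M Nᵀ = M' N'ᵀ`, the only candidate for `R` is
`Mᵀ M'`. Multiplying by `M'ᵀ` gives `N' = N R` at once. Substituting this back and cancelling `Nᵀ`,
which is possible because `N` has full column rank, gives `M = M' Rᵀ`; then
`R Rᵀ = Mᵀ M' Rᵀ = Mᵀ M = 1`, and since `R` is square it is orthogonal.
-/

section

variable {A m n p : Type*} [CommRing A] [Fintype p]

lemma mul_transpose_left_injective_of_mulVec_injective {N : Matrix n p A}
    (hN : Function.Injective N.mulVec) :
    Function.Injective (fun X : Matrix m p A => X * Nᵀ) := by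
  cases isEmpty_or_nonempty m
  · exact Function.injective_of_subsingleton _
  · simpa only [mul_left_injective_iff_vecMul_injective, vecMul_transpose] using hN

lemma mulVec_injective_of_rank_eq_card [Nontrivial A] {N : Matrix n p A}
    (hN : N.rank = Fintype.card p) : Function.Injective N.mulVec := by
  rw [mulVec_injective_iff, linearIndependent_iff_card_eq_finrank_span, Set.finrank,
    ← rank_eq_finrank_span_cols, hN]

variable [DecidableEq p]

lemma mul_mul_transpose_mul_of_orthogonal {R : Matrix p p A} (hR : Rᵀ * R = 1)
    (M : Matrix m p A) (N : Matrix n p A) : M * R * (N * R)ᵀ = M * Nᵀ := by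
  have hR' : R * Rᵀ = 1 := mul_eq_one_comm.mp hR
  calc M * R * (N * R)ᵀ = M * (R * Rᵀ) * Nᵀ := by simp only [transpose_mul, Matrix.mul_assoc]
    _ = M * Nᵀ := by rw [hR', Matrix.mul_one]

lemma transpose_mul_self_mul_of_orthogonal [Fintype m] {M : Matrix m p A} {R : Matrix p p A}
    (hM : Mᵀ * M = 1) (hR : Rᵀ * R = 1) : (M * R)ᵀ * (M * R) = 1 := by
  calc (M * R)ᵀ * (M * R) = Rᵀ * (Mᵀ * M) * R := by simp only [transpose_mul, Matrix.mul_assoc]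
    _ = 1 := by rw [hM, Matrix.mul_one, hR]

lemma exists_orthogonal_of_mul_transpose_eq [Fintype m]
    {M M' : Matrix m p A} {N N' : Matrix n p A} (hM : Mᵀ * M = 1) (hM' : M'ᵀ * M' = 1)
    (hN : Function.Injective N.mulVec) (h : M * Nᵀ = M' * N'ᵀ) :
    ∃ R : Matrix p p A, Rᵀ * R = 1 ∧ M' = M * R ∧ N' = N * R := by
  set R := Mᵀ * M' with hR_def
  have hN' : N' = N * R := by
    apply transpose_injective
    calc N'ᵀ = M'ᵀ * (M' * N'ᵀ) := by rw [← Matrix.mul_assoc, hM', Matrix.one_mul]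
      _ = M'ᵀ * (M * Nᵀ) := by rw [h]
      _ = (N * R)ᵀ := by
        simp only [hR_def, transpose_mul, transpose_transpose, Matrix.mul_assoc]
  have hM_eq : M = M' * Rᵀ := by
    apply mul_transpose_left_injective_of_mulVec_injective hN
    simp only [h, hN', transpose_mul, Matrix.mul_assoc]
  have hR : Rᵀ * R = 1 := by
    apply mul_eq_one_comm.mp
    calc R * Rᵀ = Mᵀ * (M' * Rᵀ) := Matrix.mul_assoc ..
      _ = 1 := by rw [← hM_eq, hM]
  have hM'_eq : M' = M * R := by
    rw [hM_eq, Matrix.mul_assoc, hR, Matrix.mul_one]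
  exact ⟨R, hR, hM'_eq, hN'⟩

theorem mul_transpose_eq_iff_exists_orthogonal [Fintype m]
    {M M' : Matrix m p A} {N N' : Matrix n p A} (hM : Mᵀ * M = 1) (hM' : M'ᵀ * M' = 1)
    (hN : Function.Injective N.mulVec) :
    M * Nᵀ = M' * N'ᵀ ↔ ∃ R : Matrix p p A, Rᵀ * R = 1 ∧ M' = M * R ∧ N' = N * R := by
  constructor
  · exact exists_orthogonal_of_mul_transpose_eq hM hM' hN
  · rintro ⟨R, hR, rfl, rfl⟩
    exact (mul_mul_transpose_mul_of_orthogonal hR M N).symm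

theorem fiber_Op_general [Nontrivial A] [Fintype m]
    (M M' : Matrix m p A) (N N' : Matrix n p A)
    (hM : Mᵀ * M = 1) (hM' : M'ᵀ * M' = 1) (hN : N.rank = Fintype.card p) :
    (M * Nᵀ = M' * N'ᵀ ↔
      ∃ R : Matrix p p A, Rᵀ * R = 1 ∧ M' = M * R ∧ N' = N * R) ∧
    {q : Matrix m p A × Matrix n p A |
        q.1ᵀ * q.1 = 1 ∧ q.2.rank = Fintype.card p ∧ q.1 * q.2ᵀ = M * Nᵀ} =
      {q : Matrix m p A × Matrix n p A |
        ∃ R : Matrix p p A, Rᵀ * R = 1 ∧ q.1 = M * R ∧ q.2 = N * R} := by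
  have hN_inj : Function.Injective N.mulVec := mulVec_injective_of_rank_eq_card hN
  refine ⟨mul_transpose_eq_iff_exists_orthogonal hM hM' hN_inj, Set.ext fun q => ⟨?_, ?_⟩⟩
  · rintro ⟨hq₁, -, hq⟩
    exact (mul_transpose_eq_iff_exists_orthogonal hM hq₁ hN_inj).mp hq.symm
  · obtain ⟨M₁, N₁⟩ := q
    rintro ⟨R, hR, rfl, rfl⟩
    have hrank : (N * R).rank = Fintype.card p := by
      rw [rank_mul_eq_left_of_isUnit_det R N (isUnit_det_of_left_inverse hR), hN]
    exact ⟨transpose_mul_self_mul_of_orthogonal hM hR, hrank,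
      mul_mul_transpose_mul_of_orthogonal hR M N⟩

end

/-- With orthonormal first factors, M Nᵀ = M' N'ᵀ iff M' = M R and N' = N R for some
orthogonal R; consequently the fiber of π over M Nᵀ is { (M R, N R) : R ∈ O(p) }. -/
theorem fiber_Op (m n p : ℕ) (hp : 0 < p) (hpm : p ≤ m) (hpn : p ≤ n)
    (M M' : Matrix (Fin m) (Fin p) ℝ) (N N' : Matrix (Fin n) (Fin p) ℝ)
    (hM : Mᵀ * M = 1) (hM' : M'ᵀ * M' = 1) (hN : N.rank = p) (hN' : N'.rank = p) :
    (M * Nᵀ = M' * N'ᵀ ↔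
      ∃ R : Matrix (Fin p) (Fin p) ℝ, Rᵀ * R = 1 ∧ M' = M * R ∧ N' = N * R) ∧
    {q : Matrix (Fin m) (Fin p) ℝ × Matrix (Fin n) (Fin p) ℝ |
        q.1ᵀ * q.1 = 1 ∧ q.2.rank = p ∧ q.1 * q.2ᵀ = M * Nᵀ} =
      {q : Matrix (Fin m) (Fin p) ℝ × Matrix (Fin n) (Fin p) ℝ |
        ∃ R : Matrix (Fin p) (Fin p) ℝ, Rᵀ * R = 1 ∧ q.1 = M * R ∧ q.2 = N * R} := by
  simpa only [Fintype.card_fin] using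
    fiber_Op_general M M' N N' hM hM' (hN.trans (Fintype.card_fin p).symm)
end

section
/- Let M be an m×p real matrix of rank p and N an n×p real matrix of rank p. The linear map Φ : ℝ^{m×p} × ℝ^{n×p} → ℝ^{m×n} defined by Φ(Ṁ, Ṅ) = Ṁ Nᵀ + M Ṅᵀ has rank p(m+n−p); that is, the dimension of its range equals p(m+n−p). Hence the map π(M,N) = M Nᵀ is a submersion at every point of its domain. -/
open Matrix

/-- The differential of π : (M,N) ↦ M Nᵀ at (M,N). -/
def dPi (m n p : ℕ) (M : Matrix (Fin m) (Fin p) ℝ) (N : Matrix (Fin n) (Fin p) ℝ) :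
    (Matrix (Fin m) (Fin p) ℝ × Matrix (Fin n) (Fin p) ℝ) →ₗ[ℝ] Matrix (Fin m) (Fin n) ℝ where
  toFun d := d.1 * Nᵀ + M * d.2ᵀ
  map_add' a b := by
    simp [Matrix.add_mul, Matrix.mul_add, Matrix.transpose_add]
    abel
  map_smul' c a := by
    simp [Matrix.transpose_smul, Matrix.smul_mul, Matrix.mul_smul, smul_add]

/-!
Given linear maps `S : U → W` and `T : V → U`, a linear map `h : V → W` has the form
`f ∘ T + S ∘ g` exactly when it sends `ker T` into `range S`: lift `h` on `ker T` through `S` and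
extend the lift to `g` on all of `V`; then `h - S ∘ g` vanishes on `ker T`, so it factors through
`T`. Hence the range of the differential of `(S, T) ↦ S ∘ T` is the kernel of the surjection
`Hom(V, W) → Hom(ker T, coker S)`, and has codimension `dim ker T * dim coker S`. For matrices,
take `S = M` and `T = Nᵀ`.
-/

open Module LinearMap

theorem exists_comp_eq_of_range_le {R P M N : Type*} [Semiring R] [AddCommMonoid P]
    [AddCommMonoid M] [AddCommMonoid N] [Module R P] [Module R M] [Module R N] [Projective R P]
    {S : M →ₗ[R] N} {h : P →ₗ[R] N} (hS : range h ≤ range S) :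
    ∃ g : P →ₗ[R] M, S ∘ₗ g = h := by
  obtain ⟨g, hg⟩ := projective_lifting_property S.rangeRestrict
    (h.codRestrict (range S) fun x ↦ hS (mem_range_self h x)) S.surjective_rangeRestrict
  exact ⟨g, LinearMap.ext fun x ↦ congrArg Subtype.val (LinearMap.congr_fun hg x)⟩

theorem exists_comp_eq_of_ker_le {K V U W : Type*} [DivisionRing K] [AddCommGroup V]
    [AddCommGroup U] [AddCommGroup W] [Module K V] [Module K U] [Module K W]
    {T : V →ₗ[K] U} {h : V →ₗ[K] W} (hT : ker T ≤ ker h) :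
    ∃ f : U →ₗ[K] W, f ∘ₗ T = h := by
  obtain ⟨f, hf⟩ :=
    ((ker T).liftQ h hT ∘ₗ T.quotKerEquivRange.symm.toLinearMap).exists_extend
  refine ⟨f, LinearMap.ext fun v ↦ ?_⟩
  calc f (T v) = (ker T).liftQ h hT (T.quotKerEquivRange.symm (T.rangeRestrict v)) :=
        LinearMap.congr_fun hf (T.rangeRestrict v)
    _ = (ker T).liftQ h hT ((ker T).mkQ v) :=
        congrArg _ (T.quotKerEquivRange_symm_apply_image v (mem_range_self T v))
    _ = h v := rfl

section CommRing

variable {R V U W : Type*} [CommRing R] [AddCommGroup V] [AddCommGroup U] [AddCommGroup W]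
  [Module R V] [Module R U] [Module R W] (S : U →ₗ[R] W) (T : V →ₗ[R] U)

/-- The differential `(f, g) ↦ f ∘ T + S ∘ g` of the composition map at `(S, T)`, the
coordinate-free form of `dPi`. -/
def compDifferential : (U →ₗ[R] W) × (V →ₗ[R] U) →ₗ[R] V →ₗ[R] W :=
  (lcomp R W T).coprod (S.compRight R)

/-- The map `Hom(V, W) → Hom(ker T, coker S)` that restricts to the kernel of `T` and then projects
to the cokernel of `S`, encoded as `W ⧸ range S`. Over a field, its kernel is the range of
`compDifferential S T`. -/
def kerToCoker : (V →ₗ[R] W) →ₗ[R] ker T →ₗ[R] W ⧸ range S :=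
  (range S).mkQ.compRight R ∘ₗ lcomp R W (ker T).subtype

theorem mem_ker_kerToCoker {h : V →ₗ[R] W} :
    h ∈ ker (kerToCoker S T) ↔ ∀ v ∈ ker T, h v ∈ range S := by
  simp [kerToCoker, LinearMap.ext_iff]

end CommRing

section Field

variable {K V U W : Type*} [Field K] [AddCommGroup V] [AddCommGroup U] [AddCommGroup W]
  [Module K V] [Module K U] [Module K W] (S : U →ₗ[K] W) (T : V →ₗ[K] U)

theorem kerToCoker_surjective : Function.Surjective (kerToCoker S T) := by
  intro k
  obtain ⟨l, hl⟩ := projective_lifting_property (range S).mkQ k (range S).mkQ_surjective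
  obtain ⟨h, hh⟩ := l.exists_extend
  exact ⟨h, by rw [← hl, ← hh]; rfl⟩

theorem range_compDifferential_eq_ker_kerToCoker :
    range (compDifferential S T) = ker (kerToCoker S T) := by
  ext h
  rw [mem_ker_kerToCoker]
  constructor
  · rintro ⟨⟨f, g⟩, rfl⟩ v hv
    simp [compDifferential, mem_ker.mp hv]
  · intro hST
    obtain ⟨g₀, hg₀⟩ : ∃ g₀ : ker T →ₗ[K] U, S ∘ₗ g₀ = h ∘ₗ (ker T).subtype :=
      exists_comp_eq_of_range_le (by rintro _ ⟨v, rfl⟩; exact hST v v.2)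
    obtain ⟨g, rfl⟩ := g₀.exists_extend
    have hker : ker T ≤ ker (h - S ∘ₗ g) := fun v hv ↦
      sub_eq_zero.mpr (LinearMap.congr_fun hg₀ ⟨v, hv⟩).symm
    obtain ⟨f, hf⟩ := exists_comp_eq_of_ker_le hker
    exact ⟨(f, g), show f ∘ₗ T + S ∘ₗ g = h by rw [hf, sub_add_cancel]⟩

variable [FiniteDimensional K V] [FiniteDimensional K W]

theorem finrank_range_compDifferential_add_finrank_ker_mul_finrank_coker :
    finrank K (range (compDifferential S T)) + finrank K (ker T) * finrank K (W ⧸ range S) =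
      finrank K V * finrank K W := by
  have rank_nullity := finrank_range_add_finrank_ker (kerToCoker S T)
  rw [range_eq_top.mpr (kerToCoker_surjective S T), finrank_top, finrank_linearMap,
    finrank_linearMap] at rank_nullity
  rw [range_compDifferential_eq_ker_kerToCoker, add_comm, rank_nullity]

theorem finrank_range_compDifferential_add_finrank_range_mul_finrank_range :
    finrank K (range (compDifferential S T)) + finrank K (range S) * finrank K (range T) =
      finrank K (range S) * finrank K V + finrank K W * finrank K (range T) := by
  have codim := finrank_range_compDifferential_add_finrank_ker_mul_finrank_coker S T
  have dim_V := finrank_range_add_finrank_ker T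
  have dim_W := (range S).finrank_quotient_add_finrank
  rw [← dim_V, ← dim_W] at codim ⊢
  linarith

end Field

section Matrix

variable {m n p : Type*} [Fintype p]

/-- The differential of `(M, N) ↦ M * Nᵀ` at `(M, N)`, for matrices over a commutative ring
with arbitrary index types; `dPi` is the real case with indices in `Fin`. -/
def mulTransposeDifferential {R : Type*} [CommRing R] (M : Matrix m p R) (N : Matrix n p R) :
    Matrix m p R × Matrix n p R →ₗ[R] Matrix m n R where
  toFun d := d.1 * Nᵀ + M * d.2ᵀ
  map_add' a b := by
    simp only [Prod.fst_add, Prod.snd_add, transpose_add, Matrix.add_mul, Matrix.mul_add]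
    abel
  map_smul' c a := by simp

theorem map_toLin'_range_mulTransposeDifferential {R : Type*} [CommRing R] [Fintype n]
    [DecidableEq n] [DecidableEq p] (M : Matrix m p R) (N : Matrix n p R) :
    (range (mulTransposeDifferential M N)).map (toLin' : Matrix m n R ≃ₗ[R] _).toLinearMap =
      range (compDifferential (toLin' M) (toLin' Nᵀ)) := by
  let toLinPair : (Matrix m p R × Matrix n p R) ≃ₗ[R] _ :=
    toLin'.prodCongr (transposeLinearEquiv n p R R ≪≫ₗ toLin')
  have intertwines : toLin'.toLinearMap ∘ₗ mulTransposeDifferential M N =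
      compDifferential (toLin' M) (toLin' Nᵀ) ∘ₗ toLinPair.toLinearMap :=
    LinearMap.ext fun d ↦ by
      change toLin' (d.1 * Nᵀ + M * d.2ᵀ) = toLin' d.1 ∘ₗ toLin' Nᵀ + toLin' M ∘ₗ toLin' d.2ᵀ
      rw [map_add, toLin'_mul, toLin'_mul]
  rw [← range_comp, intertwines, range_comp_of_range_eq_top _ toLinPair.range]

theorem dPi_rank_general {K : Type*} [Field K] [Fintype m] [Fintype n] (M : Matrix m p K)
    (N : Matrix n p K) :
    finrank K (range (mulTransposeDifferential M N)) + M.rank * N.rank =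
      M.rank * Fintype.card n + Fintype.card m * N.rank := by
  classical
  rw [← LinearEquiv.finrank_map_eq toLin', map_toLin'_range_mulTransposeDifferential,
    ← N.rank_transpose, ← finrank_fintype_fun_eq_card K, ← finrank_fintype_fun_eq_card K]
  exact finrank_range_compDifferential_add_finrank_range_mul_finrank_range (toLin' M) (toLin' Nᵀ)

end Matrix

/-- The differential of π at a full-rank pair (M,N) has rank p(m+n-p); hence π is a
submersion at every point of its domain. -/
theorem dPi_rank (m n p : ℕ) (hp : 0 < p) (hpm : p ≤ m) (hpn : p ≤ n)
    (M : Matrix (Fin m) (Fin p) ℝ) (N : Matrix (Fin n) (Fin p) ℝ)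
    (hM : M.rank = p) (hN : N.rank = p) :
    Module.finrank ℝ (LinearMap.range (dPi m n p M N)) = p * (m + n - p) := by
  have general : Module.finrank ℝ (LinearMap.range (dPi m n p M N)) + _ = _ := dPi_rank_general M N
  rw [hM, hN, Fintype.card_fin, Fintype.card_fin] at general
  rw [Nat.mul_sub, mul_add, mul_comm p m, add_comm (m * p), ← general, Nat.add_sub_cancel]
end

section
/- Let M be an m×p real matrix of rank p and N an n×p real matrix of rank p. A pair (Ṁ, Ṅ) ∈ ℝ^{m×p} × ℝ^{n×p} satisfies trace((MᵀM)⁻¹ Ṁᵀ M Ṙ) − trace((NᵀN)⁻¹ Ṅᵀ N Ṙᵀ) = 0 for all Ṙ ∈ ℝ^{p×p} (i.e., it is orthogonal to the vertical space with respect to the weighted metric ḡ) if and only if NᵀN MᵀṀ = Ṅᵀ N MᵀM, equivalently MᵀṀ (MᵀM)⁻¹ = (NᵀN)⁻¹ Ṅᵀ N. -/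
open Matrix

/-!
The trace form is nondegenerate and `trace (Y * Rᵀ) = trace (Yᵀ * R)`, so a pair is orthogonal to
every vertical vector exactly when the coefficient matrices of `Ṙ` and `Ṙᵀ` are transposes of each
other. This is the equation with inverses; full column rank over `ℝ` makes both Gram matrices
invertible, and clearing their inverses gives the other equation.
-/

section Trace

variable {k l R : Type*} [Fintype k] [Fintype l]

theorem trace_mul_transpose_eq_trace_transpose_mul [AddCommMonoid R] [Mul R]
    (A B : Matrix k l R) : (A * Bᵀ).trace = (Aᵀ * B).trace :=
  trace_transpose_mul Aᵀ B

theorem forall_trace_mul_sub_trace_mul_transpose_eq_zero_iff [NonAssocRing R]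
    {X : Matrix k l R} {Y : Matrix l k R} :
    (∀ Z : Matrix l k R, (X * Z).trace - (Y * Zᵀ).trace = 0) ↔ Xᵀ = Y := by
  simp only [sub_eq_zero, trace_mul_transpose_eq_trace_transpose_mul]
  rw [← ext_iff_trace_mul_right, ← transpose_inj, transpose_transpose]

end Trace

section Inverse

variable {k l R : Type*} [Fintype k] [DecidableEq k] [Fintype l] [DecidableEq l] [CommRing R]

theorem mul_eq_mul_iff_mul_inv_eq_inv_mul {A : Matrix k k R} {B : Matrix l l R}
    (hA : IsUnit A) (hB : IsUnit B) {C D : Matrix l k R} :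
    B * C = D * A ↔ C * A⁻¹ = B⁻¹ * D := by
  have := hA.invertible
  have := hB.invertible
  rw [mul_inv_eq_iff_eq_mul_of_invertible, Matrix.mul_assoc, eq_comm (a := C),
    inv_mul_eq_iff_eq_mul_of_invertible, eq_comm]

end Inverse

section Rank

variable {k l K : Type*} [Fintype k] [DecidableEq k] [Field K]

theorem isUnit_iff_rank_eq_card {A : Matrix k k K} : IsUnit A ↔ A.rank = Fintype.card k := by
  rw [← linearIndependent_rows_iff_isUnit, linearIndependent_iff_card_eq_finrank_span,
    rank_eq_finrank_span_row, Set.finrank, eq_comm]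

theorem isUnit_transpose_mul_self_iff_rank_eq_card [Fintype l] [LinearOrder K]
    [IsStrictOrderedRing K] {A : Matrix l k K} :
    IsUnit (Aᵀ * A) ↔ A.rank = Fintype.card k := by
  rw [isUnit_iff_rank_eq_card, rank_transpose_mul_self]

end Rank

section Horizontal

variable {k l r R : Type*} [Fintype k] [Fintype l] [Fintype r] [DecidableEq r] [CommRing R]

theorem transpose_gram_inv_mul_transpose_mul (M dM : Matrix k r R) :
    ((Mᵀ * M)⁻¹ * dMᵀ * M)ᵀ = Mᵀ * dM * (Mᵀ * M)⁻¹ := by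
  simp only [transpose_mul, transpose_nonsing_inv, transpose_transpose, Matrix.mul_assoc]

theorem forall_weighted_trace_sub_eq_zero_iff (M dM : Matrix k r R) (N dN : Matrix l r R) :
    (∀ dR : Matrix r r R,
        ((Mᵀ * M)⁻¹ * dMᵀ * (M * dR)).trace - ((Nᵀ * N)⁻¹ * dNᵀ * (N * dRᵀ)).trace = 0) ↔
      Mᵀ * dM * (Mᵀ * M)⁻¹ = (Nᵀ * N)⁻¹ * (dNᵀ * N) := by
  simp only [← Matrix.mul_assoc _ M, ← Matrix.mul_assoc _ N]
  rw [forall_trace_mul_sub_trace_mul_transpose_eq_zero_iff,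
    transpose_gram_inv_mul_transpose_mul, Matrix.mul_assoc _ dNᵀ]

theorem horizontal_weighted_characterization_general {M : Matrix k r R} {N : Matrix l r R}
    (hM : IsUnit (Mᵀ * M)) (hN : IsUnit (Nᵀ * N)) (dM : Matrix k r R) (dN : Matrix l r R) :
    ((∀ dR : Matrix r r R,
        ((Mᵀ * M)⁻¹ * dMᵀ * (M * dR)).trace - ((Nᵀ * N)⁻¹ * dNᵀ * (N * dRᵀ)).trace = 0) ↔
      Nᵀ * N * (Mᵀ * dM) = dNᵀ * N * (Mᵀ * M)) ∧
    (Nᵀ * N * (Mᵀ * dM) = dNᵀ * N * (Mᵀ * M) ↔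
      Mᵀ * dM * (Mᵀ * M)⁻¹ = (Nᵀ * N)⁻¹ * (dNᵀ * N)) := by
  have clear_inverses := mul_eq_mul_iff_mul_inv_eq_inv_mul hM hN (C := Mᵀ * dM) (D := dNᵀ * N)
  exact ⟨(forall_weighted_trace_sub_eq_zero_iff M dM N dN).trans clear_inverses.symm,
    clear_inverses⟩

end Horizontal

/-- Orthogonality of (Ṁ,Ṅ) to the vertical space with respect to the weighted metric ḡ
is characterized by NᵀN MᵀṀ = ṄᵀN MᵀM, equivalently MᵀṀ (MᵀM)⁻¹ = (NᵀN)⁻¹ ṄᵀN. -/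
theorem horizontal_weighted_characterization (m n p : ℕ) (hp : 0 < p) (hpm : p ≤ m) (hpn : p ≤ n)
    (M : Matrix (Fin m) (Fin p) ℝ) (N : Matrix (Fin n) (Fin p) ℝ)
    (hM : M.rank = p) (hN : N.rank = p)
    (dM : Matrix (Fin m) (Fin p) ℝ) (dN : Matrix (Fin n) (Fin p) ℝ) :
    ((∀ dR : Matrix (Fin p) (Fin p) ℝ,
        ((Mᵀ * M)⁻¹ * dMᵀ * (M * dR)).trace - ((Nᵀ * N)⁻¹ * dNᵀ * (N * dRᵀ)).trace = 0) ↔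
      Nᵀ * N * (Mᵀ * dM) = dNᵀ * N * (Mᵀ * M)) ∧
    (Nᵀ * N * (Mᵀ * dM) = dNᵀ * N * (Mᵀ * M) ↔
      Mᵀ * dM * (Mᵀ * M)⁻¹ = (Nᵀ * N)⁻¹ * (dNᵀ * N)) := by
  have gram_M := isUnit_transpose_mul_self_iff_rank_eq_card.2 (hM.trans (Fintype.card_fin p).symm)
  have gram_N := isUnit_transpose_mul_self_iff_rank_eq_card.2 (hN.trans (Fintype.card_fin p).symm)
  exact horizontal_weighted_characterization_general gram_M gram_N dM dN
end

section
/- Let M be an m×p real matrix of rank p and N an n×p real matrix of rank p. The linear map on ℝ^{p×p} given by K ↦ MᵀM NᵀN K + K MᵀM NᵀN is bijective; hence for every C ∈ ℝ^{p×p} the Sylvester equation MᵀM NᵀN K + K MᵀM NᵀN = C has a unique solution K. -/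
open Matrix

/-!
After vectorization, `K ↦ P K Q + R K S` is the matrix `Qᵀ ⊗ P + Sᵀ ⊗ R`, which is positive definite
as soon as `P`, `Q` are positive definite and `R`, `S` positive semidefinite. The Sylvester operator
is of this form up to invertible factors: `A B K + K C D = A (B K D⁻¹ + A⁻¹ K C) D`.
-/

section Field

variable {F m n : Type*} [Field F] [Fintype n]

lemma mulVec_injective_iff_rank_eq_card {M : Matrix m n F} :
    Function.Injective M.mulVec ↔ M.rank = Fintype.card n := by
  rw [mulVec_injective_iff, linearIndependent_iff_card_eq_finrank_span,
    rank_eq_finrank_span_cols, Set.finrank, eq_comm]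

lemma posDef_transpose_mul_self_of_rank_eq_card [PartialOrder F] [StarRing F] [StarOrderedRing F]
    [TrivialStar F] [Fintype m] {M : Matrix m n F} (hM : M.rank = Fintype.card n) :
    (Mᵀ * M).PosDef := by
  rw [← conjTranspose_eq_transpose_of_trivial]
  exact PosDef.conjTranspose_mul_self M (mulVec_injective_iff_rank_eq_card.mpr hM)

end Field

section CommRing

variable {R m n : Type*} [CommRing R] [Fintype m] [Fintype n] [DecidableEq m] [DecidableEq n]

lemma bijective_mul_mul_of_isUnit {A : Matrix m m R} {D : Matrix n n R}
    (hA : IsUnit A) (hD : IsUnit D) :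
    Function.Bijective (fun K : Matrix m n R => A * K * D) := by
  rw [isUnit_iff_isUnit_det] at hA hD
  refine Function.bijective_iff_has_inverse.mpr ⟨fun K => A⁻¹ * K * D⁻¹, fun K => ?_, fun K => ?_⟩
  · simp only [Matrix.mul_assoc, mul_nonsing_inv D hD, Matrix.mul_one,
      nonsing_inv_mul_cancel_left A _ hA]
  · simp only [Matrix.mul_assoc, nonsing_inv_mul D hD, Matrix.mul_one,
      mul_nonsing_inv_cancel_left A _ hA]

end CommRing

section RCLike

variable {𝕜 m n : Type*} [RCLike 𝕜] [Fintype m] [Fintype n]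

open scoped ComplexOrder Kronecker

lemma bijective_mul_mul_add_mul_mul {P R : Matrix m m 𝕜} {Q S : Matrix n n 𝕜}
    (hP : P.PosDef) (hQ : Q.PosDef) (hR : R.PosSemidef) (hS : S.PosSemidef) :
    Function.Bijective (fun K : Matrix m n 𝕜 => P * K * Q + R * K * S) := by
  classical
  have kronecker_posDef : (Qᵀ ⊗ₖ P + Sᵀ ⊗ₖ R).PosDef :=
    (hQ.transpose.kronecker hP).add_posSemidef (hS.transpose.kronecker hR)
  have vec_comp : vec ∘ (fun K : Matrix m n 𝕜 => P * K * Q + R * K * S) =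
      (Qᵀ ⊗ₖ P + Sᵀ ⊗ₖ R).mulVec ∘ vec := by
    funext K
    simp only [Function.comp_apply, add_mulVec, kronecker_mulVec_vec, transpose_transpose, vec_add]
  rw [← Function.Bijective.of_comp_iff' vec_bijective, vec_comp]
  exact .comp ⟨mulVec_injective_iff_isUnit.mpr kronecker_posDef.isUnit,
    mulVec_surjective_iff_isUnit.mpr kronecker_posDef.isUnit⟩ vec_bijective

theorem sylvester_bijective_general {A B : Matrix m m 𝕜} {C D : Matrix n n 𝕜}
    (hA : A.PosDef) (hB : B.PosDef) (hC : C.PosSemidef) (hD : D.PosDef) :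
    Function.Bijective (fun K : Matrix m n 𝕜 => A * B * K + K * (C * D)) := by
  classical
  have hA_det : IsUnit A.det := (isUnit_iff_isUnit_det A).mp hA.isUnit
  have hD_det : IsUnit D.det := (isUnit_iff_isUnit_det D).mp hD.isUnit
  have factorization (K : Matrix m n 𝕜) :
      A * B * K + K * (C * D) = A * (B * K * D⁻¹ + A⁻¹ * K * C) * D := by
    simp only [Matrix.mul_add, Matrix.add_mul, Matrix.mul_assoc, nonsing_inv_mul D hD_det,
      Matrix.mul_one, mul_nonsing_inv_cancel_left A _ hA_det]
  simp only [factorization]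
  exact (bijective_mul_mul_of_isUnit hA.isUnit hD.isUnit).comp
    (bijective_mul_mul_add_mul_mul hB hD.inv hA.inv.posSemidef hC)

end RCLike

/-- The Sylvester operator K ↦ MᵀM NᵀN K + K MᵀM NᵀN is bijective when M and N have
full rank p; hence the Sylvester equation has a unique solution for every right-hand side. -/
theorem sylvester_bijective (m n p : ℕ) (hp : 0 < p) (hpm : p ≤ m) (hpn : p ≤ n)
    (M : Matrix (Fin m) (Fin p) ℝ) (N : Matrix (Fin n) (Fin p) ℝ)
    (hM : M.rank = p) (hN : N.rank = p) :
    Function.Bijective (fun K : Matrix (Fin p) (Fin p) ℝ =>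
        Mᵀ * M * (Nᵀ * N) * K + K * (Mᵀ * M * (Nᵀ * N))) ∧
    ∀ C : Matrix (Fin p) (Fin p) ℝ, ∃! K : Matrix (Fin p) (Fin p) ℝ,
        Mᵀ * M * (Nᵀ * N) * K + K * (Mᵀ * M * (Nᵀ * N)) = C := by
  have hMM : (Mᵀ * M).PosDef := posDef_transpose_mul_self_of_rank_eq_card (by simpa using hM)
  have hNN : (Nᵀ * N).PosDef := posDef_transpose_mul_self_of_rank_eq_card (by simpa using hN)
  have bijective := sylvester_bijective_general hMM hNN hMM.posSemidef hNN
  exact ⟨bijective, bijective.existsUnique⟩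
end

section
/- Let M be an m×p real matrix of rank p, N an n×p real matrix of rank p, and let Ẋ ∈ ℝ^{m×n} lie in the range of the map (Ṁ,Ṅ) ↦ Ṁ Nᵀ + M Ṅᵀ. Let K be the (unique) solution of the Sylvester equation MᵀM NᵀN K + K MᵀM NᵀN = Mᵀ Ẋ N, and set Ẋ_M = (Ẋ N − M NᵀN K)(NᵀN)⁻¹ and Ẋ_N = (Ẋᵀ M − N MᵀM Kᵀ)(MᵀM)⁻¹. Then (Ẋ_M, Ẋ_N) satisfies the horizontality condition NᵀN MᵀẊ_M = Ẋ_Nᵀ N MᵀM together with Ẋ_M Nᵀ + M Ẋ_Nᵀ = Ẋ, and it is the unique pair with these two properties. -/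
open Matrix

/-!
The kernel of `(U, V) ↦ U Nᴴ + M Vᴴ` is the vertical space `{(M Z, -N Zᴴ)}`, and a horizontal pair
is orthogonal to it for the weighted metric. Since that metric is definite, a horizontal pair is
determined by its image.

For existence, put `R = X - (X_M Nᴴ + M X_Nᴴ)`. The Sylvester equation gives `Mᴴ X_M = K MᴴM` and
`X_Nᴴ N = NᴴN K`, hence horizontality, and also `R N = 0` and `Mᴴ R = 0`. The only matrix of the
form `U Nᴴ + M Vᴴ` annihilated in this way is `0`.
-/

section PositiveDefinite

variable {m p R : Type*} [Fintype m] [Fintype p]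

theorem trace_mul_mul_conjTranspose_pos [Ring R] [PartialOrder R] [StarRing R]
    [IsOrderedCancelAddMonoid R] {P : Matrix p p R} (hP : P.PosDef) {U : Matrix m p R}
    (hU : U ≠ 0) : 0 < (U * P * Uᴴ).trace := by
  obtain ⟨i, hi⟩ : ∃ i, U i ≠ 0 := Function.ne_iff.mp hU
  have hdiag : (U * P * Uᴴ) i i = star (star (U i)) ⬝ᵥ P *ᵥ star (U i) := by
    rw [star_star, dotProduct_mulVec]
    rfl
  refine Finset.sum_pos'
    (fun j _ ↦ (hP.posSemidef.mul_mul_conjTranspose_same U).diag_nonneg) ⟨i, Finset.mem_univ i, ?_⟩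
  rw [diag_apply, hdiag]
  exact hP.dotProduct_mulVec_pos (star_ne_zero.mpr hi)

theorem posDef_conjTranspose_mul_self_of_rank_eq_card [Field R] [PartialOrder R] [StarRing R]
    [StarOrderedRing R] {M : Matrix m p R} (hM : M.rank = Fintype.card p) : (Mᴴ * M).PosDef := by
  refine .conjTranspose_mul_self M ?_
  rw [mulVec_injective_iff, linearIndependent_iff_card_eq_finrank_span, ← hM,
    rank_eq_finrank_span_cols]
  rfl

end PositiveDefinite

section Tangent

variable {m n p R : Type*} [Fintype n] [Fintype p] [DecidableEq p] [CommRing R] [StarRing R]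
  {M U : Matrix m p R} {N V : Matrix n p R}

theorem exists_eq_mul_of_mul_conjTranspose_add_mul_eq_zero (hN : IsUnit (Nᴴ * N).det)
    (h : (U * Nᴴ + M * Vᴴ) * N = 0) : ∃ Z : Matrix p p R, U = M * Z := by
  have hUN : U * (Nᴴ * N) = M * -(Vᴴ * N) := by
    rw [Matrix.mul_neg, ← Matrix.mul_assoc, ← Matrix.mul_assoc, ← add_eq_zero_iff_eq_neg,
      ← Matrix.add_mul, h]
  refine ⟨-(Vᴴ * N) * (Nᴴ * N)⁻¹, ?_⟩
  rw [← Matrix.mul_assoc, ← hUN, mul_nonsing_inv_cancel_right _ _ hN]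

variable [Fintype m]

theorem mul_conjTranspose_add_eq_zero_of_mul_eq_zero (hM : IsUnit (Mᴴ * M).det)
    (hN : IsUnit (Nᴴ * N).det)
    (hright : (U * Nᴴ + M * Vᴴ) * N = 0) (hleft : Mᴴ * (U * Nᴴ + M * Vᴴ) = 0) :
    U * Nᴴ + M * Vᴴ = 0 := by
  obtain ⟨Z, rfl⟩ := exists_eq_mul_of_mul_conjTranspose_add_mul_eq_zero hN hright
  rw [Matrix.mul_assoc, ← Matrix.mul_add] at hleft ⊢
  rw [← Matrix.mul_assoc] at hleft
  rw [← nonsing_inv_mul_cancel_left _ (Z * Nᴴ + Vᴴ) hM, hleft, Matrix.mul_zero, Matrix.mul_zero]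

theorem exists_vertical_of_mul_conjTranspose_add_eq_zero (hM : IsUnit (Mᴴ * M).det)
    (hN : IsUnit (Nᴴ * N).det) (h : U * Nᴴ + M * Vᴴ = 0) :
    ∃ Z : Matrix p p R, U = M * Z ∧ V = -(N * Zᴴ) := by
  obtain ⟨Z, rfl⟩ := exists_eq_mul_of_mul_conjTranspose_add_mul_eq_zero hN
    (by rw [h, Matrix.zero_mul])
  have hZV : Z * Nᴴ + Vᴴ = 0 := by
    rw [← nonsing_inv_mul_cancel_left _ (Z * Nᴴ + Vᴴ) hM, Matrix.mul_assoc Mᴴ, Matrix.mul_add,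
      ← Matrix.mul_assoc M, h, Matrix.mul_zero, Matrix.mul_zero]
  refine ⟨Z, rfl, ?_⟩
  simpa using congrArg conjTranspose (eq_neg_of_add_eq_zero_right hZV)

end Tangent

section Horizontal

variable {m n p R : Type*} [Fintype m] [Fintype n] [Fintype p]

/-- The weighted metric at `(M, N)` evaluated on `(U, V)` and `(U', V')`. The order
of `V` and `V'` in the second term, immaterial when the involution is trivial, reflects that `V`
enters `U Nᴴ + M Vᴴ` conjugate-linearly. -/
noncomputable def weightedMetric [DecidableEq p] [CommRing R] [StarRing R] (M : Matrix m p R)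
    (N : Matrix n p R) (U : Matrix m p R) (V : Matrix n p R) (U' : Matrix m p R)
    (V' : Matrix n p R) : R :=
  ((Mᴴ * M)⁻¹ * (Uᴴ * U')).trace + ((Nᴴ * N)⁻¹ * (V'ᴴ * V)).trace

/-- The pair `(U, V)` lies in the horizontal space at `(M, N)` of the weighted metric. -/
def IsWeightedHorizontal [CommRing R] [StarRing R] (M : Matrix m p R) (N : Matrix n p R)
    (U : Matrix m p R) (V : Matrix n p R) : Prop :=
  Nᴴ * N * (Mᴴ * U) = Vᴴ * N * (Mᴴ * M)

theorem eq_zero_of_weightedMetric_self_eq_zero [DecidableEq p] [Field R] [PartialOrder R]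
    [StarRing R] [StarOrderedRing R] {M U : Matrix m p R} {N V : Matrix n p R}
    (hM : (Mᴴ * M).PosDef) (hN : (Nᴴ * N).PosDef) (h : weightedMetric M N U V U V = 0) :
    U = 0 ∧ V = 0 := by
  have hU : 0 ≤ (U * (Mᴴ * M)⁻¹ * Uᴴ).trace :=
    (hM.inv.posSemidef.mul_mul_conjTranspose_same U).trace_nonneg
  have hV : 0 ≤ (V * (Nᴴ * N)⁻¹ * Vᴴ).trace :=
    (hN.inv.posSemidef.mul_mul_conjTranspose_same V).trace_nonneg
  rw [weightedMetric, ← Matrix.mul_assoc, ← Matrix.mul_assoc, trace_mul_cycle _ Uᴴ,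
    trace_mul_cycle _ Vᴴ, add_eq_zero_iff_of_nonneg hU hV] at h
  constructor
  · by_contra hne
    exact (trace_mul_mul_conjTranspose_pos hM.inv hne).ne' h.1
  · by_contra hne
    exact (trace_mul_mul_conjTranspose_pos hN.inv hne).ne' h.2

namespace IsWeightedHorizontal

section Orthogonality

variable [CommRing R] [StarRing R] {M U U' : Matrix m p R} {N V V' : Matrix n p R}

theorem sub (h : IsWeightedHorizontal M N U V) (h' : IsWeightedHorizontal M N U' V') :
    IsWeightedHorizontal M N (U - U') (V - V') := by
  unfold IsWeightedHorizontal at *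
  simp only [Matrix.mul_sub, conjTranspose_sub, Matrix.sub_mul, h, h']

theorem weightedMetric_vertical_eq_zero [DecidableEq p] (h : IsWeightedHorizontal M N U V)
    (hM : IsUnit (Mᴴ * M).det) (hN : IsUnit (Nᴴ * N).det) (Z : Matrix p p R) :
    weightedMetric M N U V (M * Z) (-(N * Zᴴ)) = 0 := by
  have hadj : Uᴴ * M * (Nᴴ * N) = Mᴴ * M * (Nᴴ * V) := by
    simpa [Matrix.mul_assoc] using congrArg conjTranspose h
  have hUM : (Mᴴ * M)⁻¹ * (Uᴴ * M) = Nᴴ * V * (Nᴴ * N)⁻¹ := by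
    rw [← mul_nonsing_inv_cancel_right _ (Uᴴ * M) hN, hadj, Matrix.mul_assoc (Mᴴ * M),
      nonsing_inv_mul_cancel_left _ _ hM]
  have htrace : ((Mᴴ * M)⁻¹ * (Uᴴ * (M * Z))).trace = ((Nᴴ * N)⁻¹ * (Z * Nᴴ * V)).trace := by
    rw [← Matrix.mul_assoc Uᴴ, ← Matrix.mul_assoc, hUM, Matrix.mul_assoc, trace_mul_comm,
      Matrix.mul_assoc, Matrix.mul_assoc Z]
  rw [weightedMetric, htrace]
  simp

end Orthogonality

section Uniqueness

variable [Field R] [PartialOrder R] [StarRing R] [StarOrderedRing R]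
  {M U U' : Matrix m p R} {N V V' : Matrix n p R}

theorem eq_zero_of_mul_conjTranspose_add_eq_zero (h : IsWeightedHorizontal M N U V)
    (hM : (Mᴴ * M).PosDef) (hN : (Nᴴ * N).PosDef) (hUV : U * Nᴴ + M * Vᴴ = 0) :
    U = 0 ∧ V = 0 := by
  classical
  have uM := (isUnit_iff_isUnit_det _).mp hM.isUnit
  have uN := (isUnit_iff_isUnit_det _).mp hN.isUnit
  obtain ⟨Z, rfl, rfl⟩ := exists_vertical_of_mul_conjTranspose_add_eq_zero uM uN hUV
  exact eq_zero_of_weightedMetric_self_eq_zero hM hN (h.weightedMetric_vertical_eq_zero uM uN Z)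

theorem eq_of_mul_conjTranspose_add_eq (h : IsWeightedHorizontal M N U V)
    (h' : IsWeightedHorizontal M N U' V') (hM : (Mᴴ * M).PosDef) (hN : (Nᴴ * N).PosDef)
    (heq : U * Nᴴ + M * Vᴴ = U' * Nᴴ + M * V'ᴴ) : U = U' ∧ V = V' := by
  have hdiff : (U - U') * Nᴴ + M * (V - V')ᴴ = 0 := by
    rw [Matrix.sub_mul, conjTranspose_sub, Matrix.mul_sub, sub_add_sub_comm, heq, sub_self]
  simpa only [sub_eq_zero] using
    (h.sub h').eq_zero_of_mul_conjTranspose_add_eq_zero hM hN hdiff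

end Uniqueness

end IsWeightedHorizontal

end Horizontal

section Lift

variable {m n p R : Type*} [Fintype n] [Fintype p] [CommRing R] [StarRing R]

/-- The component `X_M` of the horizontal lift of `X` built from the Sylvester solution `K`. The
setting is symmetric under `(M, N, X, K) ↦ (N, M, Xᴴ, Kᴴ)`, so the other component `X_N` is
`liftFactor N M Xᴴ Kᴴ`. -/
noncomputable def liftFactor [DecidableEq p] (M : Matrix m p R) (N : Matrix n p R)
    (X : Matrix m n R) (K : Matrix p p R) : Matrix m p R :=
  (X * N - M * (Nᴴ * N) * K) * (Nᴴ * N)⁻¹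

variable {M : Matrix m p R} {N : Matrix n p R} {X : Matrix m n R} {K : Matrix p p R}

theorem liftFactor_mul_conjTranspose_mul_self [DecidableEq p] (hN : IsUnit (Nᴴ * N).det) :
    liftFactor M N X K * (Nᴴ * N) = X * N - M * (Nᴴ * N) * K :=
  nonsing_inv_mul_cancel_right _ _ hN

variable [Fintype m]

theorem sylvester_conjTranspose
    (hK : Mᴴ * M * (Nᴴ * N) * K + K * (Mᴴ * M * (Nᴴ * N)) = Mᴴ * X * N) :
    Nᴴ * N * (Mᴴ * M) * Kᴴ + Kᴴ * (Nᴴ * N * (Mᴴ * M)) = Nᴴ * Xᴴ * M := by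
  simpa [Matrix.mul_assoc, add_comm] using congrArg conjTranspose hK

variable [DecidableEq p]

theorem conjTranspose_mul_liftFactor (hN : IsUnit (Nᴴ * N).det)
    (hK : Mᴴ * M * (Nᴴ * N) * K + K * (Mᴴ * M * (Nᴴ * N)) = Mᴴ * X * N) :
    Mᴴ * liftFactor M N X K = K * (Mᴴ * M) := by
  have hnum : Mᴴ * (X * N - M * (Nᴴ * N) * K) = K * (Mᴴ * M) * (Nᴴ * N) := by
    rw [Matrix.mul_sub, ← Matrix.mul_assoc Mᴴ X, ← hK]
    simp only [Matrix.mul_assoc, add_sub_cancel_left]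
  rw [liftFactor, ← Matrix.mul_assoc, hnum, mul_nonsing_inv_cancel_right _ _ hN]

theorem conjTranspose_liftFactor_mul (hM : IsUnit (Mᴴ * M).det)
    (hK : Mᴴ * M * (Nᴴ * N) * K + K * (Mᴴ * M * (Nᴴ * N)) = Mᴴ * X * N) :
    (liftFactor N M Xᴴ Kᴴ)ᴴ * N = Nᴴ * N * K := by
  simpa using congrArg conjTranspose (conjTranspose_mul_liftFactor hM (sylvester_conjTranspose hK))

theorem isWeightedHorizontal_liftFactor (hM : IsUnit (Mᴴ * M).det) (hN : IsUnit (Nᴴ * N).det)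
    (hK : Mᴴ * M * (Nᴴ * N) * K + K * (Mᴴ * M * (Nᴴ * N)) = Mᴴ * X * N) :
    IsWeightedHorizontal M N (liftFactor M N X K) (liftFactor N M Xᴴ Kᴴ) := by
  rw [IsWeightedHorizontal, conjTranspose_mul_liftFactor hN hK, conjTranspose_liftFactor_mul hM hK,
    Matrix.mul_assoc (Nᴴ * N)]

theorem liftFactor_mul_conjTranspose_add_mul (hM : IsUnit (Mᴴ * M).det)
    (hN : IsUnit (Nᴴ * N).det)
    (hK : Mᴴ * M * (Nᴴ * N) * K + K * (Mᴴ * M * (Nᴴ * N)) = Mᴴ * X * N) :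
    (liftFactor M N X K * Nᴴ + M * (liftFactor N M Xᴴ Kᴴ)ᴴ) * N = X * N := by
  rw [Matrix.add_mul, Matrix.mul_assoc, liftFactor_mul_conjTranspose_mul_self hN,
    Matrix.mul_assoc M _ N, conjTranspose_liftFactor_mul hM hK, Matrix.mul_assoc M, sub_add_cancel]

theorem conjTranspose_mul_liftFactor_add (hM : IsUnit (Mᴴ * M).det) (hN : IsUnit (Nᴴ * N).det)
    (hK : Mᴴ * M * (Nᴴ * N) * K + K * (Mᴴ * M * (Nᴴ * N)) = Mᴴ * X * N) :
    Mᴴ * (liftFactor M N X K * Nᴴ + M * (liftFactor N M Xᴴ Kᴴ)ᴴ) = Mᴴ * X := by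
  simpa [add_comm] using congrArg conjTranspose
    (liftFactor_mul_conjTranspose_add_mul hN hM (sylvester_conjTranspose hK))

theorem liftFactor_mul_conjTranspose_add (hM : IsUnit (Mᴴ * M).det) (hN : IsUnit (Nᴴ * N).det)
    (hX : ∃ (U : Matrix m p R) (V : Matrix n p R), U * Nᴴ + M * Vᴴ = X)
    (hK : Mᴴ * M * (Nᴴ * N) * K + K * (Mᴴ * M * (Nᴴ * N)) = Mᴴ * X * N) :
    liftFactor M N X K * Nᴴ + M * (liftFactor N M Xᴴ Kᴴ)ᴴ = X := by
  obtain ⟨U, V, hUV⟩ := hX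
  have hresidual : (liftFactor M N X K - U) * Nᴴ + M * (liftFactor N M Xᴴ Kᴴ - V)ᴴ =
      liftFactor M N X K * Nᴴ + M * (liftFactor N M Xᴴ Kᴴ)ᴴ - X := by
    rw [Matrix.sub_mul, conjTranspose_sub, Matrix.mul_sub, sub_add_sub_comm, hUV]
  rw [← sub_eq_zero, ← hresidual]
  apply mul_conjTranspose_add_eq_zero_of_mul_eq_zero hM hN
  · rw [hresidual, Matrix.sub_mul, liftFactor_mul_conjTranspose_add_mul hM hN hK, sub_self]
  · rw [hresidual, Matrix.mul_sub, conjTranspose_mul_liftFactor_add hM hN hK, sub_self]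

end Lift

theorem horizontal_lift_weighted_general {m n p R : Type*} [Fintype m] [Fintype n] [Fintype p]
    [DecidableEq p] [Field R] [PartialOrder R] [StarRing R] [StarOrderedRing R]
    {M : Matrix m p R} {N : Matrix n p R} (hM : M.rank = Fintype.card p)
    (hN : N.rank = Fintype.card p) {X : Matrix m n R}
    (hX : ∃ (U : Matrix m p R) (V : Matrix n p R), U * Nᴴ + M * Vᴴ = X) {K : Matrix p p R}
    (hK : Mᴴ * M * (Nᴴ * N) * K + K * (Mᴴ * M * (Nᴴ * N)) = Mᴴ * X * N) :
    (IsWeightedHorizontal M N (liftFactor M N X K) (liftFactor N M Xᴴ Kᴴ) ∧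
      liftFactor M N X K * Nᴴ + M * (liftFactor N M Xᴴ Kᴴ)ᴴ = X) ∧
    ∀ (YM : Matrix m p R) (YN : Matrix n p R),
      IsWeightedHorizontal M N YM YN → YM * Nᴴ + M * YNᴴ = X →
        YM = liftFactor M N X K ∧ YN = liftFactor N M Xᴴ Kᴴ := by
  have pM := posDef_conjTranspose_mul_self_of_rank_eq_card hM
  have pN := posDef_conjTranspose_mul_self_of_rank_eq_card hN
  have uM := (isUnit_iff_isUnit_det _).mp pM.isUnit
  have uN := (isUnit_iff_isUnit_det _).mp pN.isUnit
  have hhor := isWeightedHorizontal_liftFactor uM uN hK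
  have hlift := liftFactor_mul_conjTranspose_add uM uN hX hK
  exact ⟨⟨hhor, hlift⟩, fun YM YN hY hYX ↦
    hY.eq_of_mul_conjTranspose_add_eq hhor pM pN (hYX.trans hlift.symm)⟩

/-- Horizontal lift in the weighted geometry: the pair (Ẋ_M, Ẋ_N) built from the solution K
of the Sylvester equation is the unique horizontal pair projecting to Ẋ. -/
theorem horizontal_lift_weighted (m n p : ℕ) (hp : 0 < p) (hpm : p ≤ m) (hpn : p ≤ n)
    (M : Matrix (Fin m) (Fin p) ℝ) (N : Matrix (Fin n) (Fin p) ℝ)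
    (hM : M.rank = p) (hN : N.rank = p)
    (X : Matrix (Fin m) (Fin n) ℝ)
    (hX : ∃ (dM : Matrix (Fin m) (Fin p) ℝ) (dN : Matrix (Fin n) (Fin p) ℝ),
        dM * Nᵀ + M * dNᵀ = X)
    (K : Matrix (Fin p) (Fin p) ℝ)
    (hK : Mᵀ * M * (Nᵀ * N) * K + K * (Mᵀ * M * (Nᵀ * N)) = Mᵀ * X * N)
    (XM : Matrix (Fin m) (Fin p) ℝ) (XN : Matrix (Fin n) (Fin p) ℝ)
    (hXM : XM = (X * N - M * (Nᵀ * N) * K) * (Nᵀ * N)⁻¹)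
    (hXN : XN = (Xᵀ * M - N * (Mᵀ * M) * Kᵀ) * (Mᵀ * M)⁻¹) :
    (Nᵀ * N * (Mᵀ * XM) = XNᵀ * N * (Mᵀ * M) ∧ XM * Nᵀ + M * XNᵀ = X) ∧
    ∀ (YM : Matrix (Fin m) (Fin p) ℝ) (YN : Matrix (Fin n) (Fin p) ℝ),
      Nᵀ * N * (Mᵀ * YM) = YNᵀ * N * (Mᵀ * M) → YM * Nᵀ + M * YNᵀ = X →
        YM = XM ∧ YN = XN := by
  subst hXM hXN
  simp only [← conjTranspose_eq_transpose_of_trivial] at hX hK ⊢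
  exact horizontal_lift_weighted_general (by simpa using hM) (by simpa using hN) hX hK
end

section
/- Let M be an m×p real matrix of rank p, N an n×p real matrix of rank p, R an invertible p×p real matrix, and Ẋ ∈ ℝ^{m×n} in the range of (Ṁ,Ṅ) ↦ Ṁ Nᵀ + M Ṅᵀ. If (Ẋ_M, Ẋ_N) is the horizontal lift of Ẋ at (M,N) (i.e., the unique pair with NᵀN MᵀẊ_M = Ẋ_Nᵀ N MᵀM and Ẋ_M Nᵀ + M Ẋ_Nᵀ = Ẋ), then (Ẋ_M R, Ẋ_N R⁻ᵀ) is the horizontal lift of Ẋ at (M R, N R⁻ᵀ): it satisfies the horizontality condition at (M R, N R⁻ᵀ) and (Ẋ_M R)(N R⁻ᵀ)ᵀ + (M R)(Ẋ_N R⁻ᵀ)ᵀ = Ẋ. -/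
open Matrix

section WeightedHorizontalLift

variable {m n p α : Type*} [Fintype p] [CommRing α]

/-- The pair `(XM, XN)` is a horizontal lift of `X` at `(M, N)` for the metric
`trace ((MᵀM)⁻¹ ṀᵀM̌) + trace ((NᵀN)⁻¹ ṄᵀŇ)` on the total space of the factorization
`(M, N) ↦ M Nᵀ`. Horizontality is encoded by an inverse-free equation, which makes sense over any
commutative ring and amounts to orthogonality to the fibre `{(M R, N R⁻ᵀ)}` when `M` and `N` are
real of full column rank. -/
structure IsWeightedHorizontalLift [Fintype m] [Fintype n] (M : Matrix m p α) (N : Matrix n p α)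
    (X : Matrix m n α) (XM : Matrix m p α) (XN : Matrix n p α) : Prop where
  horizontal : Nᵀ * N * (Mᵀ * XM) = XNᵀ * N * (Mᵀ * M)
  lift : XM * Nᵀ + M * XNᵀ = X

variable [DecidableEq p] {R : Matrix p p α}

theorem mul_mul_transpose_mul_inv_transpose (hR : IsUnit R) (A : Matrix m p α)
    (B : Matrix n p α) : A * R * (B * R⁻¹ᵀ)ᵀ = A * Bᵀ := by
  have hdet : IsUnit R.det := R.isUnit_iff_isUnit_det.mp hR
  rw [transpose_mul, transpose_transpose, Matrix.mul_assoc, mul_nonsing_inv_cancel_left _ _ hdet]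

theorem mul_inv_transpose_mul_transpose_mul (hR : IsUnit R) (A : Matrix m p α)
    (B : Matrix n p α) : A * R⁻¹ᵀ * (B * R)ᵀ = A * Bᵀ := by
  simpa only [transpose_mul, transpose_transpose] using
    congrArg transpose (mul_mul_transpose_mul_inv_transpose hR B A)

theorem transpose_mul_mul_transpose_mul_eq_conj [Fintype m] [Fintype n] (hR : IsUnit R)
    (A B : Matrix n p α) (C D : Matrix m p α) :
    (A * R⁻¹ᵀ)ᵀ * (B * R⁻¹ᵀ) * ((C * R)ᵀ * (D * R)) = R⁻¹ * (Aᵀ * B * (Cᵀ * D)) * R :=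
  calc
    _ = R⁻¹ * Aᵀ * (B * R⁻¹ᵀ * (C * R)ᵀ) * (D * R) := by
      rw [transpose_mul A, transpose_transpose]
      simp only [Matrix.mul_assoc]
    _ = R⁻¹ * Aᵀ * (B * Cᵀ) * (D * R) := by rw [mul_inv_transpose_mul_transpose_mul hR]
    _ = R⁻¹ * (Aᵀ * B * (Cᵀ * D)) * R := by simp only [Matrix.mul_assoc]

theorem horizontal_lift_equivariance_weighted_general [Fintype m] [Fintype n] (hR : IsUnit R)
    {M XM : Matrix m p α} {N XN : Matrix n p α} {X : Matrix m n α}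
    (h : IsWeightedHorizontalLift M N X XM XN) :
    IsWeightedHorizontalLift (M * R) (N * R⁻¹ᵀ) X (XM * R) (XN * R⁻¹ᵀ) where
  horizontal := by simp only [transpose_mul_mul_transpose_mul_eq_conj hR, h.horizontal]
  lift := by simp only [mul_mul_transpose_mul_inv_transpose hR, h.lift]

end WeightedHorizontalLift

/-- Constitutive equation of horizontal lifts in the weighted geometry: if (Ẋ_M, Ẋ_N) is the
horizontal lift of Ẋ at (M,N), then (Ẋ_M R, Ẋ_N R⁻ᵀ) is the horizontal lift of Ẋ at
(M R, N R⁻ᵀ). -/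
theorem horizontal_lift_equivariance_weighted (m n p : ℕ) (hp : 0 < p) (hpm : p ≤ m) (hpn : p ≤ n)
    (M : Matrix (Fin m) (Fin p) ℝ) (N : Matrix (Fin n) (Fin p) ℝ)
    (hM : M.rank = p) (hN : N.rank = p)
    (R : Matrix (Fin p) (Fin p) ℝ) (hR : IsUnit R)
    (X : Matrix (Fin m) (Fin n) ℝ)
    (hX : ∃ (dM : Matrix (Fin m) (Fin p) ℝ) (dN : Matrix (Fin n) (Fin p) ℝ),
        dM * Nᵀ + M * dNᵀ = X)
    (XM : Matrix (Fin m) (Fin p) ℝ) (XN : Matrix (Fin n) (Fin p) ℝ)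
    (hhor : Nᵀ * N * (Mᵀ * XM) = XNᵀ * N * (Mᵀ * M))
    (hlift : XM * Nᵀ + M * XNᵀ = X) :
    (N * (R⁻¹)ᵀ)ᵀ * (N * (R⁻¹)ᵀ) * ((M * R)ᵀ * (XM * R)) =
        (XN * (R⁻¹)ᵀ)ᵀ * (N * (R⁻¹)ᵀ) * ((M * R)ᵀ * (M * R)) ∧
    (XM * R) * (N * (R⁻¹)ᵀ)ᵀ + (M * R) * (XN * (R⁻¹)ᵀ)ᵀ = X := by
  obtain ⟨horizontal, lift⟩ := horizontal_lift_equivariance_weighted_general hR ⟨hhor, hlift⟩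
  exact ⟨horizontal, lift⟩
end

section
/- Let M be an m×p real matrix of rank p, N an n×p real matrix of rank p, and R an invertible p×p real matrix. For all Ẋ_M, X̌_M ∈ ℝ^{m×p} and Ẋ_N, X̌_N ∈ ℝ^{n×p}, trace(((MR)ᵀ(MR))⁻¹ (Ẋ_M R)ᵀ (X̌_M R)) + trace(((NR⁻ᵀ)ᵀ(NR⁻ᵀ))⁻¹ (Ẋ_N R⁻ᵀ)ᵀ (X̌_N R⁻ᵀ)) = trace((MᵀM)⁻¹ Ẋ_Mᵀ X̌_M) + trace((NᵀN)⁻¹ Ẋ_Nᵀ X̌_N). Hence the weighted metric ḡ satisfies the invariance condition required for π(M,N)=MNᵀ to be a Riemannian submersion. -/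
open Matrix

/-!
Right multiplication by an invertible `S` turns the Gram matrix `G = Mᵀ M` into `Sᵀ G S`. Cycling
the trace moves the factors `S` and `Sᵀ` of the tangent vectors onto the two sides of
`(Sᵀ G S)⁻¹`, where they cancel and leave `G⁻¹`. So each summand of the metric is already invariant
on its own, the second one with `S = R⁻ᵀ`.
-/

section Gram

variable {K ι κ : Type*} [Field K] [Fintype ι] [Fintype κ] [DecidableEq κ]

theorem isUnit_of_rank_eq_card {A : Matrix κ κ K} (hA : A.rank = Fintype.card κ) : IsUnit A := by
  rw [← linearIndependent_cols_iff_isUnit, linearIndependent_iff_card_eq_finrank_span, ← hA]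
  exact A.rank_eq_finrank_span_cols

theorem isUnit_transpose_mul_self_of_rank_eq_card [LinearOrder K] [IsStrictOrderedRing K]
    {M : Matrix ι κ K} (hM : M.rank = Fintype.card κ) : IsUnit (Mᵀ * M) :=
  isUnit_of_rank_eq_card (M.rank_transpose_mul_self.trans hM)

end Gram

section WeightedInner

variable {A ι ι' κ : Type*} [CommRing A] [Fintype ι] [Fintype ι'] [Fintype κ] [DecidableEq κ]

theorem mul_inv_mul_mul_mul_cancel {P Q : Matrix κ κ A} (hP : IsUnit P) (hQ : IsUnit Q)
    (G : Matrix κ κ A) : P * (Q * G * P)⁻¹ * Q = G⁻¹ := by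
  rw [isUnit_iff_isUnit_det] at hP hQ
  rw [Matrix.mul_inv_rev, Matrix.mul_inv_rev, mul_nonsing_inv_cancel_left _ _ hP,
    nonsing_inv_mul_cancel_right _ _ hQ]

/-- The contribution of one factor `M` to the weighted metric `ḡ`, on tangent vectors `X` and `Y`.
It has its intended meaning when `Mᵀ * M` is invertible; otherwise the inverse, and with it the
whole expression, is `0`. -/
noncomputable def weightedInner (M X Y : Matrix ι κ A) : A :=
  ((Mᵀ * M)⁻¹ * Xᵀ * Y).trace

theorem weightedInner_mul_right {S : Matrix κ κ A} (hS : IsUnit S) (M X Y : Matrix ι κ A) :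
    weightedInner (M * S) (X * S) (Y * S) = weightedInner M X Y := by
  calc
    weightedInner (M * S) (X * S) (Y * S)
      = ((Sᵀ * (Mᵀ * M) * S)⁻¹ * Sᵀ * (Xᵀ * Y) * S).trace := by
        simp only [weightedInner, transpose_mul, Matrix.mul_assoc]
    _ = (S * (Sᵀ * (Mᵀ * M) * S)⁻¹ * Sᵀ * (Xᵀ * Y)).trace := by
        rw [trace_mul_comm]
        simp only [Matrix.mul_assoc]
    _ = weightedInner M X Y := by
        rw [mul_inv_mul_mul_mul_cancel hS ((isUnit_transpose _).mpr hS), weightedInner,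
          Matrix.mul_assoc _ Xᵀ Y]

theorem weighted_metric_invariance_general {M : Matrix ι κ A} {N : Matrix ι' κ A}
    (hM : IsUnit (Mᵀ * M)) (hN : IsUnit (Nᵀ * N)) {R : Matrix κ κ A} (hR : IsUnit R)
    (XM YM : Matrix ι κ A) (XN YN : Matrix ι' κ A) :
    weightedInner (M * R) (XM * R) (YM * R) +
      weightedInner (N * (R⁻¹)ᵀ) (XN * (R⁻¹)ᵀ) (YN * (R⁻¹)ᵀ) =
    weightedInner M XM YM + weightedInner N XN YN := by
  have hR_inv_transpose : IsUnit (R⁻¹)ᵀ := (isUnit_transpose _).mpr (isUnit_nonsing_inv_iff.mpr hR)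
  rw [weightedInner_mul_right hR, weightedInner_mul_right hR_inv_transpose]

end WeightedInner

/-- Invariance of the weighted metric ḡ along the fibers: the value of ḡ on horizontal
lifts transported by (M,N) ↦ (M R, N R⁻ᵀ) is unchanged; hence π(M,N) = M Nᵀ becomes a
Riemannian submersion. -/
theorem weighted_metric_invariance (m n p : ℕ) (hp : 0 < p) (hpm : p ≤ m) (hpn : p ≤ n)
    (M : Matrix (Fin m) (Fin p) ℝ) (N : Matrix (Fin n) (Fin p) ℝ)
    (hM : M.rank = p) (hN : N.rank = p)
    (R : Matrix (Fin p) (Fin p) ℝ) (hR : IsUnit R)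
    (XM YM : Matrix (Fin m) (Fin p) ℝ) (XN YN : Matrix (Fin n) (Fin p) ℝ) :
    (((M * R)ᵀ * (M * R))⁻¹ * (XM * R)ᵀ * (YM * R)).trace +
      (((N * (R⁻¹)ᵀ)ᵀ * (N * (R⁻¹)ᵀ))⁻¹ * (XN * (R⁻¹)ᵀ)ᵀ * (YN * (R⁻¹)ᵀ)).trace =
    ((Mᵀ * M)⁻¹ * XMᵀ * YM).trace + ((Nᵀ * N)⁻¹ * XNᵀ * YN).trace := by
  exact weighted_metric_invariance_general
    (isUnit_transpose_mul_self_of_rank_eq_card (hM.trans (Fintype.card_fin p).symm))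
    (isUnit_transpose_mul_self_of_rank_eq_card (hN.trans (Fintype.card_fin p).symm)) hR XM YM XN YN
end

section
/- Let M be an m×p real matrix with MᵀM = I_p and N an n×p real matrix of rank p. The linear map Φ(Ṁ, Ṅ) = Ṁ Nᵀ + M Ṅᵀ, restricted to the subspace { (Ṁ, Ṅ) : MᵀṀ + ṀᵀM = 0 } × ℝ^{n×p} of ℝ^{m×p} × ℝ^{n×p}, has range of dimension p(m+n−p). Hence the map π(M,N) = M Nᵀ restricted to pairs with orthonormal first factor is a submersion onto the manifold of rank-p matrices. -/
open Matrix

/-- The tangent space to the Stiefel manifold at M, as a subspace of ℝ^{m×p}. -/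
def stiefelTangent (m p : ℕ) (M : Matrix (Fin m) (Fin p) ℝ) :
    Submodule ℝ (Matrix (Fin m) (Fin p) ℝ) where
  carrier := {dM | Mᵀ * dM + dMᵀ * M = 0}
  add_mem' := by
    intro a b ha hb
    simp only [Set.mem_setOf_eq] at *
    rw [Matrix.mul_add, Matrix.transpose_add, Matrix.add_mul]
    calc Mᵀ * a + Mᵀ * b + (aᵀ * M + bᵀ * M)
        = (Mᵀ * a + aᵀ * M) + (Mᵀ * b + bᵀ * M) := by abel
      _ = 0 := by rw [ha, hb, add_zero]
  zero_mem' := by simp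
  smul_mem' := by
    intro c a ha
    simp only [Set.mem_setOf_eq] at *
    rw [Matrix.mul_smul, Matrix.transpose_smul, Matrix.smul_mul, ← smul_add, ha, smul_zero]

/-!
Every tangent direction `D` splits along the column space of `M` and its orthogonal complement. The
part of `D * Nᵀ` in the column space is already of the form `M * Bᵀ`, and every `D` with
`Mᵀ * D = 0` is tangent, so with `P` the orthogonal projection onto the column space the range is
the direct sum of `{M * Y}` and `{(1 - P) * Z * Nᵀ}`. Since `X ↦ A * X * B` has rank
`rank A * rank B`, these summands have dimensions `rank M * n` and `(m - rank M) * rank N`.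
-/

section Composition

variable {K V₁ V₂ V₃ V₄ : Type*} [Field K] [AddCommGroup V₁] [Module K V₁] [AddCommGroup V₂]
  [Module K V₂] [AddCommGroup V₃] [Module K V₃] [AddCommGroup V₄] [Module K V₄]

-- `f ↦ A ∘ f ∘ B` factors as a surjection onto `Hom(range B, range A)` followed by an injection.
theorem finrank_range_compRight_comp_lcomp [FiniteDimensional K V₁] [FiniteDimensional K V₃]
    (A : V₃ →ₗ[K] V₄) (B : V₁ →ₗ[K] V₂) :
    Module.finrank K (LinearMap.range (A.compRight K ∘ₗ B.lcomp K V₃)) =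
      Module.finrank K (LinearMap.range A) * Module.finrank K (LinearMap.range B) := by
  let restrict : (V₂ →ₗ[K] V₃) →ₗ[K] (LinearMap.range B →ₗ[K] LinearMap.range A) :=
    A.rangeRestrict.compRight K ∘ₗ (LinearMap.range B).subtype.lcomp K V₃
  let extend : (LinearMap.range B →ₗ[K] LinearMap.range A) →ₗ[K] (V₁ →ₗ[K] V₄) :=
    (LinearMap.range A).subtype.compRight K ∘ₗ B.rangeRestrict.lcomp K (LinearMap.range A)
  have factor : A.compRight K ∘ₗ B.lcomp K V₃ = extend ∘ₗ restrict := rfl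
  have restrict_surjective : LinearMap.range restrict = ⊤ := by
    refine LinearMap.range_eq_top.mpr fun g ↦ ?_
    obtain ⟨r, hr⟩ := A.rangeRestrict.exists_rightInverse_of_surjective A.range_rangeRestrict
    obtain ⟨f, hf⟩ := (r ∘ₗ g).exists_extend
    refine ⟨f, ?_⟩
    change A.rangeRestrict ∘ₗ (f ∘ₗ (LinearMap.range B).subtype) = g
    rw [hf, ← LinearMap.comp_assoc, hr, LinearMap.id_comp]
  have extend_injective : Function.Injective extend := fun g h hgh ↦ by
    have : g ∘ₗ B.rangeRestrict = h ∘ₗ B.rangeRestrict :=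
      LinearMap.ext fun v ↦ Subtype.ext (LinearMap.congr_fun hgh v)
    exact (LinearMap.cancel_right B.surjective_rangeRestrict).mp this
  rw [factor, LinearMap.range_comp_of_range_eq_top _ restrict_surjective,
    LinearMap.finrank_range_of_inj extend_injective, Module.finrank_linearMap, mul_comm]

end Composition

section Multiplication

variable {l m n o K : Type*} [Fintype m] [Fintype n] [Fintype o] [Field K]

theorem finrank_range_mulLeftLinearMap_comp_mulRightLinearMap (A : Matrix l m K)
    (B : Matrix n o K) :
    Module.finrank K (LinearMap.range (mulLeftLinearMap o K A ∘ₗ mulRightLinearMap m K B)) =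
      A.rank * B.rank := by
  classical
  have intertwine : (toLin' : Matrix l o K ≃ₗ[K] _).toLinearMap ∘ₗ
        (mulLeftLinearMap o K A ∘ₗ mulRightLinearMap m K B) =
      (A.toLin'.compRight K ∘ₗ B.toLin'.lcomp K (m → K)) ∘ₗ
        (toLin' : Matrix m n K ≃ₗ[K] _).toLinearMap :=
    LinearMap.ext fun X ↦ by
      simp only [LinearMap.comp_apply, LinearEquiv.coe_coe, mulLeftLinearMap_apply,
        mulRightLinearMap_apply, toLin'_mul, LinearMap.compRight_apply]
      rfl
  rw [← LinearEquiv.finrank_map_eq toLin', ← LinearMap.range_comp, intertwine,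
    LinearMap.range_comp_of_range_eq_top _ toLin'.range, finrank_range_compRight_comp_lcomp]
  rfl

theorem finrank_range_mulLeftLinearMap (A : Matrix l m K) :
    Module.finrank K (LinearMap.range (mulLeftLinearMap n K A)) = A.rank * Fintype.card n := by
  classical
  rw [← rank_one (R := K), ← finrank_range_mulLeftLinearMap_comp_mulRightLinearMap,
    mulRightLinearMap_one, LinearMap.comp_id]

end Multiplication

section Projection

theorem exists_mul_eq_of_range_mulVecLin_le {m n o R : Type*} [Fintype n] [Fintype o]
    [CommSemiring R] {A : Matrix m n R} {B : Matrix m o R}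
    (h : LinearMap.range B.mulVecLin ≤ LinearMap.range A.mulVecLin) :
    ∃ C : Matrix n o R, A * C = B := by
  classical
  have hcol (j : o) : ∃ v, A *ᵥ v = B.col j := h ⟨Pi.single j 1, by simp⟩
  choose c hc using hcol
  exact ⟨(of c)ᵀ, by ext i j; exact congrFun (hc j) i⟩

theorem rank_one_sub_of_isIdempotentElem {m K : Type*} [Fintype m] [DecidableEq m] [Field K]
    {P : Matrix m m K} (hP : IsIdempotentElem P) :
    (1 - P).rank = Fintype.card m - P.rank := by
  have hker : LinearMap.ker P.toLin' = LinearMap.range (1 - P).toLin' := by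
    rw [map_sub, toLin'_one]
    exact LinearMap.IsIdempotentElem.ker_eq_range (hP.map toLinAlgEquiv')
  have hdim := P.toLin'.finrank_range_add_finrank_ker
  rw [hker, Module.finrank_fintype_fun_eq_card] at hdim
  exact Nat.eq_sub_of_add_eq' hdim

theorem rank_mul_of_mul_mul_eq_self {m n R : Type*} [Fintype m] [Fintype n] [CommSemiring R]
    [StrongRankCondition R] {A : Matrix m n R} {C : Matrix n m R} (h : A * C * A = A) :
    (A * C).rank = A.rank :=
  le_antisymm (rank_mul_le_left A C) <| by
    simpa only [h] using rank_mul_le_left (A * C) A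

theorem disjoint_range_mulLeftLinearMap_one_sub {m n o R : Type*} [Fintype m] [DecidableEq m]
    [Fintype n] [CommRing R] {P : Matrix m m R} (hP : IsIdempotentElem P) {A : Matrix m n R}
    (hPA : P * A = A) :
    Disjoint (LinearMap.range (mulLeftLinearMap o R A))
      (LinearMap.range (mulLeftLinearMap o R (1 - P))) := by
  rw [Submodule.disjoint_def]
  rintro _ ⟨Y, rfl⟩ ⟨Z, hZ⟩
  change (1 - P) * Z = A * Y at hZ
  change A * Y = 0
  calc A * Y = P * (A * Y) := by rw [← Matrix.mul_assoc, hPA]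
    _ = P * (1 - P) * Z := by rw [← hZ, Matrix.mul_assoc]
    _ = 0 := by rw [hP.mul_one_sub_self, Matrix.zero_mul]

variable {m n R : Type*} [Fintype m] [Fintype n] [Field R] [PartialOrder R] [StarRing R]
  [StarOrderedRing R]

theorem exists_conjTranspose_mul_mul_eq_conjTranspose (A : Matrix m n R) :
    ∃ C : Matrix n m R, Aᴴ * (A * C) = Aᴴ := by
  have hle : LinearMap.range (Aᴴ * A).mulVecLin ≤ LinearMap.range Aᴴ.mulVecLin := by
    rw [mulVecLin_mul]
    exact LinearMap.range_comp_le_range _ _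
  have hrank : (Aᴴ * A).rank = Aᴴ.rank := by
    rw [rank_conjTranspose_mul_self, rank_conjTranspose]
  obtain ⟨C, hC⟩ := exists_mul_eq_of_range_mulVecLin_le
    (Submodule.eq_of_le_of_finrank_eq hle hrank).ge
  exact ⟨C, by rw [← Matrix.mul_assoc, hC]⟩

theorem exists_isStarProjection_mul (A : Matrix m n R) :
    ∃ C : Matrix n m R, IsStarProjection (A * C) ∧ A * C * A = A := by
  obtain ⟨C, hC⟩ := exists_conjTranspose_mul_mul_eq_conjTranspose A
  have hstar_mul : (A * C)ᴴ * (A * C) = (A * C)ᴴ := by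
    rw [conjTranspose_mul, Matrix.mul_assoc, hC]
  have hself : (A * C)ᴴ = A * C := by
    have := isHermitian_conjTranspose_mul_self (A * C)
    rwa [hstar_mul, isHermitian_conjTranspose_iff] at this
  refine ⟨C, ⟨by rwa [hself] at hstar_mul, hself⟩, ?_⟩
  simpa [hself] using congrArg conjTranspose hC

end Projection

section Stiefel

variable {m n p : ℕ} {M : Matrix (Fin m) (Fin p) ℝ}

theorem mem_stiefelTangent_of_transpose_mul_eq_zero {D : Matrix (Fin m) (Fin p) ℝ}
    (h : Mᵀ * D = 0) : D ∈ stiefelTangent m p M := by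
  change Mᵀ * D + Dᵀ * M = 0
  have h' : Dᵀ * M = 0 := by simpa using congrArg transpose h
  rw [h, h', add_zero]

theorem map_dPi_stiefelTangent_prod_top {C : Matrix (Fin p) (Fin m) ℝ}
    (hC : Mᵀ * (M * C) = Mᵀ) (N : Matrix (Fin n) (Fin p) ℝ) :
    Submodule.map (dPi m n p M N) ((stiefelTangent m p M).prod ⊤) =
      LinearMap.range (mulLeftLinearMap (Fin n) ℝ M) ⊔
        LinearMap.range
          (mulLeftLinearMap (Fin n) ℝ (1 - M * C) ∘ₗ mulRightLinearMap (Fin m) ℝ Nᵀ) := by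
  apply le_antisymm
  · rintro _ ⟨⟨D, B⟩, -, rfl⟩
    refine Submodule.mem_sup.mpr
      ⟨M * (C * D * Nᵀ + Bᵀ), ⟨_, rfl⟩, (1 - M * C) * (D * Nᵀ), ⟨D, rfl⟩, ?_⟩
    change _ = D * Nᵀ + M * Bᵀ
    simp only [Matrix.mul_add, Matrix.sub_mul, Matrix.one_mul, Matrix.mul_assoc]
    abel
  · refine sup_le ?_ ?_
    · rintro _ ⟨Y, rfl⟩
      exact ⟨(0, Yᵀ), ⟨Submodule.zero_mem _, trivial⟩, by simp [dPi]⟩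
    · rintro _ ⟨Z, rfl⟩
      have hZ : Mᵀ * ((1 - M * C) * Z) = 0 := by
        rw [← Matrix.mul_assoc, Matrix.mul_sub, Matrix.mul_one, hC, sub_self, Matrix.zero_mul]
      exact ⟨((1 - M * C) * Z, 0), ⟨mem_stiefelTangent_of_transpose_mul_eq_zero hZ, trivial⟩,
        by simp [dPi, Matrix.mul_assoc]⟩

end Stiefel

theorem dPi_restricted_rank_general (m n p : ℕ) (M : Matrix (Fin m) (Fin p) ℝ)
    (N : Matrix (Fin n) (Fin p) ℝ) :
    Module.finrank ℝ
        (Submodule.map (dPi m n p M N) ((stiefelTangent m p M).prod ⊤)) =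
      M.rank * n + (m - M.rank) * N.rank := by
  obtain ⟨C, hproj, hCM⟩ := exists_isStarProjection_mul M
  have hsymm : (M * C)ᵀ = M * C :=
    (conjTranspose_eq_transpose_of_trivial _).symm.trans hproj.isSelfAdjoint.star_eq
  have hC : Mᵀ * (M * C) = Mᵀ := by
    rw [← hsymm, ← transpose_mul, hCM]
  let S := LinearMap.range (mulLeftLinearMap (Fin n) ℝ M)
  let T := LinearMap.range
    (mulLeftLinearMap (Fin n) ℝ (1 - M * C) ∘ₗ mulRightLinearMap (Fin m) ℝ Nᵀ)
  have hST : S ⊓ T = ⊥ :=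
    ((disjoint_range_mulLeftLinearMap_one_sub hproj.isIdempotentElem hCM).mono_right
      (LinearMap.range_comp_le_range _ _)).eq_bot
  have hS : Module.finrank ℝ S = M.rank * n := by
    rw [finrank_range_mulLeftLinearMap, Fintype.card_fin]
  have hT : Module.finrank ℝ T = (m - M.rank) * N.rank := by
    rw [finrank_range_mulLeftLinearMap_comp_mulRightLinearMap, rank_transpose,
      rank_one_sub_of_isIdempotentElem hproj.isIdempotentElem, rank_mul_of_mul_mul_eq_self hCM,
      Fintype.card_fin]
  rw [map_dPi_stiefelTangent_prod_top hC, ← hS, ← hT, ← Submodule.finrank_sup_add_finrank_inf_eq,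
    hST, finrank_bot, add_zero]

/-- The differential of π at (M,N), with M orthonormal and N of rank p, restricted to the
tangent space of the Stiefel manifold times ℝ^{n×p}, has range of dimension p(m+n−p);
hence the restricted π is a submersion onto the manifold of rank-p matrices. -/
theorem dPi_restricted_rank (m n p : ℕ) (hp : 0 < p) (hpm : p ≤ m) (hpn : p ≤ n)
    (M : Matrix (Fin m) (Fin p) ℝ) (N : Matrix (Fin n) (Fin p) ℝ)
    (hM : Mᵀ * M = 1) (hN : N.rank = p) :
    Module.finrank ℝ
        (Submodule.map (dPi m n p M N) ((stiefelTangent m p M).prod ⊤)) =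
      p * (m + n - p) := by
  have hMrank : M.rank = p := by rw [← rank_transpose_mul_self, hM, rank_one, Fintype.card_fin]
  rw [dPi_restricted_rank_general, hMrank, hN, Nat.sub_add_comm hpm]
  ring
end

section
/- Let M be an m×p real matrix with MᵀM = I_p and N an n×p real matrix of rank p. For (Ṁ, Ṅ) with MᵀṀ + ṀᵀM = 0: Ṁ Nᵀ + M Ṅᵀ = 0 if and only if there exists a skew-symmetric Ω ∈ ℝ^{p×p} such that Ṁ = M Ω and Ṅ = N Ω. Thus the vertical space at (M,N) of the restricted submersion π(M,N) = M Nᵀ equals { (M Ω, N Ω) : Ω = −Ωᵀ ∈ ℝ^{p×p} }. -/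
open Matrix

/-!
If `L * M = 1`, then `dM * P + M * dP = 0` forces `dP = -(Ω * P)` with `Ω = L * dM`, and cancelling
`P` leaves `dM = M * Ω`. For `L = Mᴴ` and `P = Nᴴ`, tangency of `dM = M * Ω` says exactly that `Ω`
is skew-Hermitian, and then `dNᴴ = -(Ω * Nᴴ) = (N * Ω)ᴴ`. Over `ℝ` the star is trivial.
-/

section

variable {R m n p : Type*} [Fintype p]

theorem mulVec_injective_iff_rank_eq_card_s14 [CommRing R] [Nontrivial R] {A : Matrix n p R} :
    Function.Injective A.mulVec ↔ A.rank = Fintype.card p := by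
  rw [mulVec_injective_iff, linearIndependent_iff_card_eq_finrank_span, rank_eq_finrank_span_cols,
    Set.finrank, eq_comm]

theorem vecMul_conjTranspose_injective [NonUnitalSemiring R] [StarRing R] {A : Matrix n p R}
    (hA : Function.Injective A.mulVec) : Function.Injective Aᴴ.vecMul := by
  intro v w hvw
  apply star_injective
  apply hA
  apply star_injective
  simpa only [star_mulVec, star_star] using hvw

theorem mul_add_mul_eq_zero_iff_exists [Ring R] [Fintype m] [DecidableEq p]
    {L : Matrix p m R} {M dM : Matrix m p R} {P dP : Matrix p n R}
    (hLM : L * M = 1) (hP : Function.Injective P.vecMul) :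
    dM * P + M * dP = 0 ↔ ∃ Ω : Matrix p p R, dM = M * Ω ∧ dP = -(Ω * P) := by
  constructor
  · intro h
    have hdP : dP = -(L * dM * P) := by
      apply eq_neg_of_add_eq_zero_right
      calc L * dM * P + dP = L * (dM * P + M * dP) := by
            rw [Matrix.mul_add, ← Matrix.mul_assoc, ← Matrix.mul_assoc, hLM, Matrix.one_mul]
        _ = 0 := by rw [h, Matrix.mul_zero]
    have hdM : dM * P = M * (L * dM) * P := by
      rw [eq_neg_of_add_eq_zero_left h, hdP, Matrix.mul_neg, neg_neg, Matrix.mul_assoc M]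
    exact ⟨L * dM, ext_row fun i => hP (congrFun hdM i), hdP⟩
  · rintro ⟨Ω, rfl, rfl⟩
    rw [Matrix.mul_neg, Matrix.mul_assoc, add_neg_cancel]

theorem conjTranspose_mul_mul_add_eq_zero_iff [Ring R] [StarRing R] [Fintype m]
    [DecidableEq p] {M : Matrix m p R} (hM : Mᴴ * M = 1) {Ω : Matrix p p R} :
    Mᴴ * (M * Ω) + (M * Ω)ᴴ * M = 0 ↔ Ωᴴ = -Ω := by
  rw [conjTranspose_mul, Matrix.mul_assoc Ωᴴ, ← Matrix.mul_assoc, hM, Matrix.one_mul,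
    Matrix.mul_one, add_comm, add_eq_zero_iff_eq_neg]

theorem vertical_space_orthonormal_general [Ring R] [StarRing R] [Fintype m] [DecidableEq p]
    {M dM : Matrix m p R} {N dN : Matrix n p R}
    (hM : Mᴴ * M = 1) (hN : Function.Injective N.mulVec) (htang : Mᴴ * dM + dMᴴ * M = 0) :
    dM * Nᴴ + M * dNᴴ = 0 ↔ ∃ Ω : Matrix p p R, Ωᴴ = -Ω ∧ dM = M * Ω ∧ dN = N * Ω := by
  rw [mul_add_mul_eq_zero_iff_exists hM (vecMul_conjTranspose_injective hN)]
  have dN_eq_iff {Ω : Matrix p p R} (hΩ : Ωᴴ = -Ω) : dNᴴ = -(Ω * Nᴴ) ↔ dN = N * Ω := by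
    rw [← Matrix.neg_mul, ← hΩ, ← conjTranspose_mul, conjTranspose_inj]
  constructor
  · rintro ⟨Ω, rfl, hdN⟩
    have hΩ : Ωᴴ = -Ω := (conjTranspose_mul_mul_add_eq_zero_iff hM).mp htang
    exact ⟨Ω, hΩ, rfl, (dN_eq_iff hΩ).mp hdN⟩
  · rintro ⟨Ω, hΩ, hdM, hdN⟩
    exact ⟨Ω, hdM, (dN_eq_iff hΩ).mpr hdN⟩

end

/-- Vertical space in the orthonormal-factor geometry: for M orthonormal and N of rank p,
a tangent pair (Ṁ,Ṅ) satisfies ṀNᵀ + MṄᵀ = 0 iff Ṁ = MΩ and Ṅ = NΩ for some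
skew-symmetric Ω. -/
theorem vertical_space_orthonormal (m n p : ℕ) (hp : 0 < p) (hpm : p ≤ m) (hpn : p ≤ n)
    (M : Matrix (Fin m) (Fin p) ℝ) (N : Matrix (Fin n) (Fin p) ℝ)
    (hM : Mᵀ * M = 1) (hN : N.rank = p)
    (dM : Matrix (Fin m) (Fin p) ℝ) (dN : Matrix (Fin n) (Fin p) ℝ)
    (htang : Mᵀ * dM + dMᵀ * M = 0) :
    dM * Nᵀ + M * dNᵀ = 0 ↔
      ∃ Ω : Matrix (Fin p) (Fin p) ℝ, Ωᵀ = -Ω ∧ dM = M * Ω ∧ dN = N * Ω := by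
  simp only [← conjTranspose_eq_transpose_of_trivial] at hM htang ⊢
  have hN_inj : Function.Injective N.mulVec := mulVec_injective_iff_rank_eq_card_s14.mpr (by simp [hN])
  exact vertical_space_orthonormal_general hM hN_inj htang
end

section
/- Let M be an m×p real matrix with MᵀM = I_p, N an n×p real matrix of rank p, and let Ẋ ∈ ℝ^{m×n} lie in the range of the differential (Ṁ,Ṅ) ↦ ṀNᵀ + MṄᵀ restricted to pairs with MᵀṀ skew-symmetric. Let Ω be the unique (skew-symmetric) solution of Ω(NᵀN + I) + (NᵀN + I)Ω = MᵀẊN − NᵀẊᵀM, and set S = MᵀẊN − Ω(NᵀN + I), Ẋ_M = Ẋ N (NᵀN)⁻¹ − M(Ω + S)(NᵀN)⁻¹, Ẋ_N = Ẋᵀ M + N Ω. Then MᵀẊ_M is skew-symmetric, MᵀẊ_M + NᵀẊ_N is symmetric, and Ẋ_M Nᵀ + M Ẋ_Nᵀ = Ẋ; moreover (Ẋ_M, Ẋ_N) is the unique pair with these properties. -/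
open Matrix

/-!
If `(YM, YN)` is horizontal over `X` and `W = MᴴYM`, multiplying `YM Nᴴ + M YNᴴ = X` by `Mᴴ` gives
`YN = XᴴM + N W`, and the horizontality condition then says exactly that `W` solves
`W (NᴴN + 1) + (NᴴN + 1) W = MᴴXN - NᴴXᴴM`. Since `NᴴN + 1` is positive definite, this Sylvester
equation has at most one solution, so `W = Ω`, and cancelling `Nᴴ` determines `YM`. Conversely, the
range condition on `X` provides a factorization `X - M XNᴴ = C Nᴴ` with `MᴴC = Ω`, which forces
`XM = C`.
-/

theorem eq_zero_of_trace_conjTranspose_mul_mul_nonpos {ι κ R : Type*} [Fintype ι] [Fintype κ]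
    [Ring R] [PartialOrder R] [StarRing R] [StarOrderedRing R] {A : Matrix ι ι R} (hA : A.PosDef)
    {Z : Matrix ι κ R} (hZ : (Zᴴ * A * Z).trace ≤ 0) : Z = 0 := by
  by_contra hne
  obtain ⟨j, hj⟩ : ∃ j, Z.col j ≠ 0 := by
    by_contra! hcol
    exact hne (Matrix.ext fun i j ↦ congrFun (hcol j) i)
  have hdiag : (Zᴴ * A * Z) j j = star (Z.col j) ⬝ᵥ (A *ᵥ Z.col j) := by
    rw [dotProduct_mulVec]
    rfl
  have hpos : 0 < (Zᴴ * A * Z).trace :=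
    Finset.sum_pos' (fun _ _ ↦ (hA.posSemidef.conjTranspose_mul_mul_same Z).diag_nonneg)
      ⟨j, Finset.mem_univ j, (hA.dotProduct_mulVec_pos hj).trans_eq hdiag.symm⟩
  exact hpos.not_ge hZ

section Sylvester

variable {ι κ R : Type*} [Fintype ι] [Fintype κ]
  [CommRing R] [PartialOrder R] [StarRing R] [StarOrderedRing R]

theorem eq_zero_of_sylvester_eq_zero {A : Matrix ι ι R} {B : Matrix κ κ R} (hA : A.PosDef)
    (hB : B.PosSemidef) {Z : Matrix ι κ R} (h : A * Z + Z * B = 0) : Z = 0 := by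
  have htrace : (Zᴴ * A * Z).trace + (Z * B * Zᴴ).trace = 0 := by
    rw [trace_mul_comm (Z * B), ← trace_add, Matrix.mul_assoc, ← Matrix.mul_add, h,
      Matrix.mul_zero, trace_zero]
  have hnonneg : 0 ≤ (Z * B * Zᴴ).trace := (hB.mul_mul_conjTranspose_same Z).trace_nonneg
  refine eq_zero_of_trace_conjTranspose_mul_mul_nonpos hA ?_
  rw [eq_neg_of_add_eq_zero_left htrace]
  exact neg_nonpos.2 hnonneg

theorem eq_of_sylvester_eq {A : Matrix ι ι R} (hA : A.PosDef) {Y Z : Matrix ι ι R}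
    (h : Y * A + A * Y = Z * A + A * Z) : Y = Z := by
  refine sub_eq_zero.1 (eq_zero_of_sylvester_eq_zero hA hA.posSemidef ?_)
  rw [Matrix.mul_sub, Matrix.sub_mul, sub_add_sub_comm, add_comm (A * Y), add_comm (A * Z), h,
    sub_self]

theorem conjTranspose_eq_neg_of_sylvester {A : Matrix ι ι R} (hA : A.PosDef) {C Ω : Matrix ι ι R}
    (h : Ω * A + A * Ω = C - Cᴴ) : Ωᴴ = -Ω := by
  refine eq_of_sylvester_eq hA ?_
  calc Ωᴴ * A + A * Ωᴴ = (Ω * A + A * Ω)ᴴ := by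
        simp only [conjTranspose_add, conjTranspose_mul, hA.isHermitian.eq, add_comm]
    _ = -(Ω * A + A * Ω) := by
        simp only [h, conjTranspose_sub, conjTranspose_conjTranspose, neg_sub]
    _ = -Ω * A + A * -Ω := by rw [Matrix.neg_mul, Matrix.mul_neg, neg_add]

end Sylvester

theorem mulVec_injective_of_rank_eq_card_s17 {ι κ K : Type*} [Fintype κ] [Field K]
    {N : Matrix ι κ K} (hN : N.rank = Fintype.card κ) : Function.Injective N.mulVec := by
  rw [mulVec_injective_iff, linearIndependent_iff_card_eq_finrank_span, Set.finrank,
    ← rank_eq_finrank_span_cols, hN]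

theorem isSelfAdjoint_add_star_add_mul_iff {A : Type*} [Ring A] [StarRing A] {w g : A} (c : A)
    (hg : IsSelfAdjoint g) (hw : star w = -w) :
    IsSelfAdjoint (w + (star c + g * w)) ↔ w * (g + 1) + (g + 1) * w = c - star c := by
  have hdefect : w + (star c + g * w) - star (w + (star c + g * w)) =
      w * (g + 1) + (g + 1) * w - (c - star c) := by
    simp only [star_add, star_mul, star_star, hg.star_eq, hw]
    noncomm_ring
  rw [isSelfAdjoint_iff, eq_comm, ← sub_eq_zero, hdefect, sub_eq_zero]

theorem mul_mul_cancel_left_of_mul_eq_one {ι κ r R : Type*} [Fintype ι] [Fintype r]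
    [DecidableEq r] [Semiring R] {A : Matrix r ι R} {B : Matrix ι r R} (h : A * B = 1)
    (C : Matrix r κ R) : A * (B * C) = C := by
  rw [← Matrix.mul_assoc, h, Matrix.one_mul]

section SkewParameter

variable {ι κ r R : Type*} [Fintype ι] [Fintype r] [DecidableEq r] [Ring R] [StarRing R]
  {M : Matrix ι r R} {N : Matrix κ r R} {X : Matrix ι κ R} {Ω : Matrix r r R}

theorem exists_sub_eq_mul_conjTranspose (hM : Mᴴ * M = 1) (hΩ : Ωᴴ = -Ω)
    (hX : ∃ (dM : Matrix ι r R) (dN : Matrix κ r R), dM * Nᴴ + M * dNᴴ = X) :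
    ∃ C : Matrix ι r R, X - M * (Xᴴ * M + N * Ω)ᴴ = C * Nᴴ ∧ Mᴴ * C = Ω := by
  obtain ⟨dM, dN, rfl⟩ := hX
  refine ⟨dM - M * (Mᴴ * dM) + M * Ω, ?_, ?_⟩
  · simp only [conjTranspose_add, conjTranspose_mul, conjTranspose_conjTranspose, hΩ,
      Matrix.mul_add, Matrix.add_mul, Matrix.sub_mul, Matrix.neg_mul, Matrix.mul_neg,
      mul_mul_cancel_left_of_mul_eq_one hM, Matrix.mul_assoc]
    abel
  · simp only [Matrix.mul_add, Matrix.mul_sub, mul_mul_cancel_left_of_mul_eq_one hM, sub_self,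
      zero_add]

variable [Fintype κ]

theorem isHermitian_add_conjTranspose_mul_iff_sylvester (hΩ : Ωᴴ = -Ω) :
    (Ω + Nᴴ * (Xᴴ * M + N * Ω)).IsHermitian ↔
      Ω * (Nᴴ * N + 1) + (Nᴴ * N + 1) * Ω = Mᴴ * X * N - (Mᴴ * X * N)ᴴ := by
  have hexpand : Nᴴ * (Xᴴ * M + N * Ω) = (Mᴴ * X * N)ᴴ + Nᴴ * N * Ω := by
    simp only [Matrix.mul_add, conjTranspose_mul, conjTranspose_conjTranspose, Matrix.mul_assoc]
  rw [hexpand]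
  exact isSelfAdjoint_add_star_add_mul_iff _ (isHermitian_conjTranspose_mul_self N) hΩ

theorem add_sub_mul_gram_add_one (hΩ : Ωᴴ = -Ω) :
    Ω + (Mᴴ * X * N - Ω * (Nᴴ * N + 1)) = (Xᴴ * M + N * Ω)ᴴ * N := by
  simp only [conjTranspose_add, conjTranspose_mul, conjTranspose_conjTranspose, hΩ,
    Matrix.mul_add, Matrix.add_mul, Matrix.neg_mul, Matrix.mul_one, Matrix.mul_assoc]
  abel

end SkewParameter

/-- `(YM, YN)` is a horizontal lift of `X` at `(M, N)`: `YM` is tangent to the Stiefel manifold at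
`M`, the pair is orthogonal to the orbit of `(M, N)` under the unitary group, and the differential
of `(M, N) ↦ M Nᴴ` sends it to `X`. Over a ring with trivial star, such as `ℝ`, conjugate
transposes are transposes. -/
structure IsHorizontalLift {ι κ r R : Type*} [Fintype ι] [Fintype κ] [Fintype r] [Ring R]
    [StarRing R] (M : Matrix ι r R) (N : Matrix κ r R) (X : Matrix ι κ R)
    (YM : Matrix ι r R) (YN : Matrix κ r R) : Prop where
  skew : (Mᴴ * YM)ᴴ = -(Mᴴ * YM)
  isHermitian : (Mᴴ * YM + Nᴴ * YN).IsHermitian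
  proj_eq : YM * Nᴴ + M * YNᴴ = X

namespace IsHorizontalLift

section Ring

variable {ι κ r R : Type*} [Fintype ι] [Fintype κ] [Fintype r] [DecidableEq r] [Ring R]
  [StarRing R] {M YM : Matrix ι r R} {N YN : Matrix κ r R} {X : Matrix ι κ R}

theorem snd_eq (hM : Mᴴ * M = 1) (h : IsHorizontalLift M N X YM YN) :
    YN = Xᴴ * M + N * (Mᴴ * YM) := by
  have hMX : Mᴴ * X = Mᴴ * YM * Nᴴ + YNᴴ := by
    rw [← h.proj_eq, Matrix.mul_add, mul_mul_cancel_left_of_mul_eq_one hM, Matrix.mul_assoc]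
  have hXM : Xᴴ * M = -(N * (Mᴴ * YM)) + YN := by
    simpa only [conjTranspose_add, conjTranspose_mul _ Nᴴ, conjTranspose_mul Mᴴ X, h.skew,
      conjTranspose_conjTranspose, Matrix.mul_neg] using congrArg conjTranspose hMX
  rw [hXM, neg_add_cancel_comm]

theorem sylvester (hM : Mᴴ * M = 1) (h : IsHorizontalLift M N X YM YN) :
    Mᴴ * YM * (Nᴴ * N + 1) + (Nᴴ * N + 1) * (Mᴴ * YM) = Mᴴ * X * N - (Mᴴ * X * N)ᴴ :=
  (isHermitian_add_conjTranspose_mul_iff_sylvester h.skew).1 (h.snd_eq hM ▸ h.isHermitian)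

end Ring

section CommRing

variable {ι κ r R : Type*} [Fintype ι] [Fintype κ] [Fintype r] [DecidableEq r] [CommRing R]
  [StarRing R] {M YM : Matrix ι r R} {N YN : Matrix κ r R} {X : Matrix ι κ R} {Ω : Matrix r r R}

theorem fst_eq (hN : IsUnit (Nᴴ * N).det) (h : IsHorizontalLift M N X YM YN) :
    YM = (X - M * YNᴴ) * N * (Nᴴ * N)⁻¹ := by
  rw [← h.proj_eq, add_sub_cancel_right, Matrix.mul_assoc YM,
    mul_nonsing_inv_cancel_right _ _ hN]

theorem of_sylvester (hM : Mᴴ * M = 1) (hN : IsUnit (Nᴴ * N).det)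
    (hX : ∃ (dM : Matrix ι r R) (dN : Matrix κ r R), dM * Nᴴ + M * dNᴴ = X) (hΩ : Ωᴴ = -Ω)
    (hsylv : Ω * (Nᴴ * N + 1) + (Nᴴ * N + 1) * Ω = Mᴴ * X * N - (Mᴴ * X * N)ᴴ) :
    IsHorizontalLift M N X ((X - M * (Xᴴ * M + N * Ω)ᴴ) * N * (Nᴴ * N)⁻¹) (Xᴴ * M + N * Ω) := by
  obtain ⟨C, hC, hMC⟩ := exists_sub_eq_mul_conjTranspose hM hΩ hX
  have hfst : (X - M * (Xᴴ * M + N * Ω)ᴴ) * N * (Nᴴ * N)⁻¹ = C := by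
    rw [hC, Matrix.mul_assoc C, mul_nonsing_inv_cancel_right _ _ hN]
  rw [hfst]
  exact {
    skew := by rw [hMC, hΩ]
    isHermitian := by rw [hMC]; exact (isHermitian_add_conjTranspose_mul_iff_sylvester hΩ).2 hsylv
    proj_eq := by rw [← hC, sub_add_cancel] }

end CommRing

end IsHorizontalLift

theorem horizontal_lift_orthonormal_general {ι κ r K : Type*} [Fintype ι] [Fintype κ] [Fintype r]
    [DecidableEq r] [Field K] [PartialOrder K] [StarRing K] [StarOrderedRing K]
    {M : Matrix ι r K} {N : Matrix κ r K} (hM : Mᴴ * M = 1) (hN : N.rank = Fintype.card r)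
    {X : Matrix ι κ K}
    (hX : ∃ (dM : Matrix ι r K) (dN : Matrix κ r K), dM * Nᴴ + M * dNᴴ = X)
    {Ω S : Matrix r r K}
    (hΩ : Ω * (Nᴴ * N + 1) + (Nᴴ * N + 1) * Ω = Mᴴ * X * N - Nᴴ * Xᴴ * M)
    (hS : S = Mᴴ * X * N - Ω * (Nᴴ * N + 1))
    {XM : Matrix ι r K} {XN : Matrix κ r K}
    (hXM : XM = X * N * (Nᴴ * N)⁻¹ - M * (Ω + S) * (Nᴴ * N)⁻¹)
    (hXN : XN = Xᴴ * M + N * Ω) :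
    IsHorizontalLift M N X XM XN ∧
      ∀ YM YN, IsHorizontalLift M N X YM YN → YM = XM ∧ YN = XN := by
  have hgram : IsUnit (Nᴴ * N).det := (isUnit_iff_isUnit_det _).1
    (PosDef.conjTranspose_mul_self N (mulVec_injective_of_rank_eq_card_s17 hN)).isUnit
  have hpos : (Nᴴ * N + 1).PosDef := .posSemidef_add (posSemidef_conjTranspose_mul_self N) .one
  have hsylv : Ω * (Nᴴ * N + 1) + (Nᴴ * N + 1) * Ω = Mᴴ * X * N - (Mᴴ * X * N)ᴴ := by
    simpa only [conjTranspose_mul, conjTranspose_conjTranspose, Matrix.mul_assoc] using hΩ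
  have hskew : Ωᴴ = -Ω := conjTranspose_eq_neg_of_sylvester hpos hsylv
  rw [hS, add_sub_mul_gram_add_one hskew, ← Matrix.sub_mul, ← Matrix.mul_assoc, ← Matrix.sub_mul]
    at hXM
  subst hXM hXN
  refine ⟨.of_sylvester hM hgram hX hskew hsylv, fun YM YN hY ↦ ?_⟩
  have hW : Mᴴ * YM = Ω := eq_of_sylvester_eq hpos ((hY.sylvester hM).trans hsylv.symm)
  have hYN : YN = Xᴴ * M + N * Ω := hW ▸ hY.snd_eq hM
  exact ⟨hYN ▸ hY.fst_eq hgram, hYN⟩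

/-- Horizontal lift in the orthonormal-factor geometry: the pair (Ẋ_M, Ẋ_N) built from the
skew-symmetric solution Ω of the Sylvester equation and S = MᵀẊN − Ω(NᵀN + I) is the unique
horizontal pair projecting to Ẋ. -/
theorem horizontal_lift_orthonormal (m n p : ℕ) (hp : 0 < p) (hpm : p ≤ m) (hpn : p ≤ n)
    (M : Matrix (Fin m) (Fin p) ℝ) (N : Matrix (Fin n) (Fin p) ℝ)
    (hM : Mᵀ * M = 1) (hN : N.rank = p)
    (X : Matrix (Fin m) (Fin n) ℝ)
    (hX : ∃ (dM : Matrix (Fin m) (Fin p) ℝ) (dN : Matrix (Fin n) (Fin p) ℝ),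
        (Mᵀ * dM)ᵀ = -(Mᵀ * dM) ∧ dM * Nᵀ + M * dNᵀ = X)
    (Ω S : Matrix (Fin p) (Fin p) ℝ)
    (hΩ : Ω * (Nᵀ * N + 1) + (Nᵀ * N + 1) * Ω = Mᵀ * X * N - Nᵀ * Xᵀ * M)
    (hS : S = Mᵀ * X * N - Ω * (Nᵀ * N + 1))
    (XM : Matrix (Fin m) (Fin p) ℝ) (XN : Matrix (Fin n) (Fin p) ℝ)
    (hXM : XM = X * N * (Nᵀ * N)⁻¹ - M * (Ω + S) * (Nᵀ * N)⁻¹)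
    (hXN : XN = Xᵀ * M + N * Ω) :
    ((Mᵀ * XM)ᵀ = -(Mᵀ * XM) ∧
      (Mᵀ * XM + Nᵀ * XN)ᵀ = Mᵀ * XM + Nᵀ * XN ∧
      XM * Nᵀ + M * XNᵀ = X) ∧
    ∀ (YM : Matrix (Fin m) (Fin p) ℝ) (YN : Matrix (Fin n) (Fin p) ℝ),
      (Mᵀ * YM)ᵀ = -(Mᵀ * YM) →
      (Mᵀ * YM + Nᵀ * YN)ᵀ = Mᵀ * YM + Nᵀ * YN →
      YM * Nᵀ + M * YNᵀ = X →
        YM = XM ∧ YN = XN := by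
  simp only [← conjTranspose_eq_transpose_of_trivial] at *
  have hlift := horizontal_lift_orthonormal_general hM (hN.trans (Fintype.card_fin p).symm)
    (hX.imp fun _ ↦ .imp fun _ ↦ And.right) hΩ hS hXM hXN
  exact ⟨⟨hlift.1.skew, hlift.1.isHermitian, hlift.1.proj_eq⟩,
    fun YM YN hskew hherm hproj ↦ hlift.2 YM YN ⟨hskew, hherm, hproj⟩⟩
end

section
/- Let M be an m×p real matrix with MᵀM = I_p, N an n×p real matrix of rank p, R a p×p orthogonal matrix, and Ẋ ∈ ℝ^{m×n}. If (Ẋ_M, Ẋ_N) is the horizontal lift of Ẋ at (M,N) (i.e., MᵀẊ_M skew-symmetric, MᵀẊ_M + NᵀẊ_N symmetric, and Ẋ_M Nᵀ + M Ẋ_Nᵀ = Ẋ), then (Ẋ_M R, Ẋ_N R) is the horizontal lift of Ẋ at (MR, NR); moreover the Euclidean metric is invariant: trace((Ẋ_M R)ᵀ(X̌_M R)) + trace((Ẋ_N R)ᵀ(X̌_N R)) = trace(Ẋ_Mᵀ X̌_M) + trace(Ẋ_Nᵀ X̌_N) for all X̌_M, X̌_N. -/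
open Matrix

section Congruence

variable {k l p q α : Type*} [Fintype p] [CommSemiring α]

theorem transpose_mul_mul_mul_eq_congr [Fintype k] (A B : Matrix k p α) (R : Matrix p q α) :
    (A * R)ᵀ * (B * R) = Rᵀ * (Aᵀ * B) * R := by
  simp only [transpose_mul, Matrix.mul_assoc]

theorem transpose_transpose_mul_mul (S : Matrix p p α) (R : Matrix p q α) :
    (Rᵀ * S * R)ᵀ = Rᵀ * Sᵀ * R := by
  simp only [transpose_mul, transpose_transpose, Matrix.mul_assoc]

variable [Fintype q] [DecidableEq p] {R : Matrix p q α}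

theorem mul_mul_transpose_mul_cancel (hR : R * Rᵀ = 1) (A : Matrix k p α) (B : Matrix l p α) :
    A * R * (B * R)ᵀ = A * Bᵀ := by
  rw [transpose_mul, Matrix.mul_assoc, ← Matrix.mul_assoc R, hR, Matrix.one_mul]

theorem trace_transpose_mul_mul_mul_cancel [Fintype k] (hR : R * Rᵀ = 1) (A B : Matrix k p α) :
    ((A * R)ᵀ * (B * R)).trace = (Aᵀ * B).trace := by
  rw [trace_mul_comm, mul_mul_transpose_mul_cancel hR, trace_mul_comm]

end Congruence

section EuclideanMetric

variable {m n p q α : Type*} [Fintype m] [Fintype n] [Fintype p] [Fintype q] [CommSemiring α]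

/-- The Euclidean metric `tr (Uᵀ U') + tr (Vᵀ V')` of two pairs of factors `(U, V)`, `(U', V')`. -/
def euclideanMetric (U : Matrix m p α) (V : Matrix n p α)
    (U' : Matrix m p α) (V' : Matrix n p α) : α :=
  (Uᵀ * U').trace + (Vᵀ * V').trace

theorem euclideanMetric_mul_right [DecidableEq p] {R : Matrix p q α} (hR : R * Rᵀ = 1)
    (U : Matrix m p α) (V : Matrix n p α) (U' : Matrix m p α) (V' : Matrix n p α) :
    euclideanMetric (U * R) (V * R) (U' * R) (V' * R) = euclideanMetric U V U' V' := by
  simp only [euclideanMetric, trace_transpose_mul_mul_mul_cancel hR]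

end EuclideanMetric

section HorizontalLift

variable {m n p q α : Type*} [Fintype m] [Fintype n] [Fintype p] [CommRing α]

/-- The horizontal space at `(M, N)`, as a predicate on pairs `(U, V)`. When `Mᵀ * M = 1`,
`skew` says that `U` is tangent to the set of orthonormal factors at `M`; over the reals, `isSymm`
says that `(U, V)` is orthogonal, for the Euclidean metric, to the vertical directions
`(M * Ω, N * Ω)` with `Ω` skew-symmetric. -/
structure IsHorizontal (M : Matrix m p α) (N : Matrix n p α)
    (U : Matrix m p α) (V : Matrix n p α) : Prop where
  skew : (Mᵀ * U)ᵀ = -(Mᵀ * U)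
  isSymm : (Mᵀ * U + Nᵀ * V).IsSymm

/-- `(U, V)` is a horizontal lift of `X` at `(M, N)`: a horizontal pair that the differential
`(U, V) ↦ U * Nᵀ + M * Vᵀ` of `(M, N) ↦ M * Nᵀ` sends to `X`. Uniqueness of such a pair is not
part of the predicate. -/
structure IsHorizontalLift_s18 (M : Matrix m p α) (N : Matrix n p α) (X : Matrix m n α)
    (U : Matrix m p α) (V : Matrix n p α) : Prop extends IsHorizontal M N U V where
  lift_eq : U * Nᵀ + M * Vᵀ = X

variable {M U : Matrix m p α} {N V : Matrix n p α} {X : Matrix m n α}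

theorem IsHorizontal.mul_right (h : IsHorizontal M N U V) (R : Matrix p q α) :
    IsHorizontal (M * R) (N * R) (U * R) (V * R) where
  skew := by
    rw [transpose_mul_mul_mul_eq_congr, transpose_transpose_mul_mul, h.skew, Matrix.mul_neg,
      Matrix.neg_mul]
  isSymm := by
    rw [transpose_mul_mul_mul_eq_congr, transpose_mul_mul_mul_eq_congr, ← Matrix.add_mul,
      ← Matrix.mul_add, IsSymm, transpose_transpose_mul_mul, h.isSymm.eq]

variable [Fintype q] [DecidableEq p] {R : Matrix p q α}

theorem IsHorizontalLift_s18.mul_right (h : IsHorizontalLift_s18 M N X U V) (hR : R * Rᵀ = 1) :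
    IsHorizontalLift_s18 (M * R) (N * R) X (U * R) (V * R) where
  toIsHorizontal := h.toIsHorizontal.mul_right R
  lift_eq := by
    rw [mul_mul_transpose_mul_cancel hR, mul_mul_transpose_mul_cancel hR, h.lift_eq]

theorem horizontal_lift_equivariance_orthonormal_general
    (h : IsHorizontalLift_s18 M N X U V) (hR : R * Rᵀ = 1) :
    IsHorizontalLift_s18 (M * R) (N * R) X (U * R) (V * R) ∧
      ∀ (U' : Matrix m p α) (V' : Matrix n p α),
        euclideanMetric (U * R) (V * R) (U' * R) (V' * R) = euclideanMetric U V U' V' :=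
  ⟨h.mul_right hR, euclideanMetric_mul_right hR U V⟩

end HorizontalLift

/-- Constitutive equation of horizontal lifts in the orthonormal-factor geometry: if
(Ẋ_M, Ẋ_N) is the horizontal lift of Ẋ at (M,N) and R is orthogonal, then (Ẋ_M R, Ẋ_N R) is
the horizontal lift of Ẋ at (MR, NR), and the Euclidean metric is invariant. -/
theorem horizontal_lift_equivariance_orthonormal (m n p : ℕ)
    (hp : 0 < p) (hpm : p ≤ m) (hpn : p ≤ n)
    (M : Matrix (Fin m) (Fin p) ℝ) (N : Matrix (Fin n) (Fin p) ℝ)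
    (hM : Mᵀ * M = 1) (hN : N.rank = p)
    (R : Matrix (Fin p) (Fin p) ℝ) (hR : Rᵀ * R = 1)
    (X : Matrix (Fin m) (Fin n) ℝ)
    (XM : Matrix (Fin m) (Fin p) ℝ) (XN : Matrix (Fin n) (Fin p) ℝ)
    (hskew : (Mᵀ * XM)ᵀ = -(Mᵀ * XM))
    (hsym : (Mᵀ * XM + Nᵀ * XN)ᵀ = Mᵀ * XM + Nᵀ * XN)
    (hlift : XM * Nᵀ + M * XNᵀ = X) :
    (((M * R)ᵀ * (XM * R))ᵀ = -((M * R)ᵀ * (XM * R)) ∧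
      ((M * R)ᵀ * (XM * R) + (N * R)ᵀ * (XN * R))ᵀ =
        (M * R)ᵀ * (XM * R) + (N * R)ᵀ * (XN * R) ∧
      (XM * R) * (N * R)ᵀ + (M * R) * (XN * R)ᵀ = X) ∧
    ∀ (YM : Matrix (Fin m) (Fin p) ℝ) (YN : Matrix (Fin n) (Fin p) ℝ),
      ((XM * R)ᵀ * (YM * R)).trace + ((XN * R)ᵀ * (YN * R)).trace =
        (XMᵀ * YM).trace + (XNᵀ * YN).trace := by
  obtain ⟨hlift', hmetric⟩ := horizontal_lift_equivariance_orthonormal_general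
    (R := R) ⟨⟨hskew, hsym⟩, hlift⟩ (mul_eq_one_comm.mp hR)
  exact ⟨⟨hlift'.skew, hlift'.isSymm, hlift'.lift_eq⟩, hmetric⟩
end

section
/- Let M be an m×p real matrix with MᵀM = I_p, N an n×p real matrix of rank p, and (Ṁ, Ṅ) a pair with MᵀṀ + ṀᵀM = 0. Then there is a unique skew-symmetric Ω ∈ ℝ^{p×p} solving (NᵀN + I)Ω + Ω(NᵀN + I) = ṀᵀM − MᵀṀ + ṄᵀN − NᵀṄ, and for this Ω the pair (Ṁ + MΩ, Ṅ + NΩ) is horizontal: Mᵀ(Ṁ + MΩ) is skew-symmetric and Mᵀ(Ṁ + MΩ) + Nᵀ(Ṅ + NΩ) is symmetric. Thus (Ṁ + MΩ, Ṅ + NΩ) is the projection of (Ṁ, Ṅ) onto the horizontal space along the vertical space { (MΩ, NΩ) : Ω = −Ωᵀ }. -/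
open Matrix

/-!
Horizontality of `(Ṁ + MΩ, Ṅ + NΩ)` with `Ω` skew-Hermitian is exactly a Sylvester equation
`AΩ + ΩA = C`, where `A = NᴴN + 1` is positive definite and `C` is skew-Hermitian. The operator
`X ↦ AX + XA` is injective, because `tr (Xᴴ (AX + XA)) = tr (Xᴴ A X) + tr (X A Xᴴ)` is positive for
`X ≠ 0`, and hence bijective. Since `-Xᴴ` solves the equation whenever `X` does, its unique
solution is skew-Hermitian.
-/

section Sylvester

variable {m n : Type*} [Fintype m] [Fintype n]

/-- The Sylvester operator `X ↦ A X + X B`, bundled as a linear map so that its surjectivity can be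
deduced from its injectivity in finite dimension. -/
def sylvester {R : Type*} [CommSemiring R] (A : Matrix m m R) (B : Matrix n n R) :
    Matrix m n R →ₗ[R] Matrix m n R :=
  mulLeftLinearMap n R A + mulRightLinearMap m R B

theorem sylvester_apply {R : Type*} [CommSemiring R] (A : Matrix m m R) (B : Matrix n n R)
    (X : Matrix m n R) : sylvester A B X = A * X + X * B :=
  rfl

theorem conjTranspose_sylvester {R : Type*} [CommSemiring R] [StarRing R] (A : Matrix m m R)
    (B : Matrix n n R) (X : Matrix m n R) : (sylvester A B X)ᴴ = sylvester Bᴴ Aᴴ Xᴴ := by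
  simp only [sylvester_apply, conjTranspose_add, conjTranspose_mul, add_comm]

theorem trace_conjTranspose_mul_mul_pos {R : Type*} [Ring R] [PartialOrder R] [StarRing R]
    [IsOrderedAddMonoid R] {A : Matrix m m R} (hA : A.PosDef) {X : Matrix m n R} (hX : X ≠ 0) :
    0 < (Xᴴ * A * X).trace := by
  obtain ⟨j, hj⟩ : ∃ j, X.col j ≠ 0 := by
    contrapose! hX
    ext i j
    exact congrFun (hX j) i
  have diag_eq (k : n) : (Xᴴ * A * X) k k = star (X.col k) ⬝ᵥ A *ᵥ X.col k := by
    rw [Matrix.mul_assoc]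
    rfl
  refine Finset.sum_pos' (fun k _ ↦ ?_) ⟨j, Finset.mem_univ j, ?_⟩
  · rw [diag_apply, diag_eq]
    exact hA.posSemidef.dotProduct_mulVec_nonneg _
  · rw [diag_apply, diag_eq]
    exact hA.dotProduct_mulVec_pos hj

theorem sylvester_injective {R : Type*} [CommRing R] [PartialOrder R] [StarRing R]
    [IsOrderedAddMonoid R] {A : Matrix m m R} {B : Matrix n n R} (hA : A.PosDef)
    (hB : B.PosSemidef) : Function.Injective (sylvester A B) := by
  refine (injective_iff_map_eq_zero _).mpr fun X hX ↦ ?_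
  by_contra hX_ne
  have trace_eq : (Xᴴ * sylvester A B X).trace = (Xᴴ * A * X).trace + (X * B * Xᴴ).trace := by
    rw [sylvester_apply, Matrix.mul_add, trace_add, ← Matrix.mul_assoc, trace_mul_comm Xᴴ (X * B)]
  have trace_pos : 0 < (Xᴴ * sylvester A B X).trace := trace_eq ▸ add_pos_of_pos_of_nonneg
    (trace_conjTranspose_mul_mul_pos hA hX_ne) (hB.mul_mul_conjTranspose_same X).trace_nonneg
  simp [hX] at trace_pos

variable {K : Type*} [Field K] [PartialOrder K] [StarRing K] [IsOrderedAddMonoid K]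

theorem sylvester_bijective_s19 {A : Matrix m m K} {B : Matrix n n K} (hA : A.PosDef)
    (hB : B.PosSemidef) : Function.Bijective (sylvester A B) :=
  have inj := sylvester_injective hA hB
  ⟨inj, LinearMap.injective_iff_surjective.mp inj⟩

theorem existsUnique_skewHermitian_sylvester_eq {A C : Matrix n n K} (hA : A.PosDef)
    (hC : Cᴴ = -C) : ∃! X : Matrix n n K, Xᴴ = -X ∧ sylvester A A X = C := by
  have bij := sylvester_bijective_s19 hA hA.posSemidef
  obtain ⟨X, hX⟩ := bij.surjective C
  have skew : Xᴴ = -X := bij.injective <| calc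
    sylvester A A Xᴴ = (sylvester A A X)ᴴ := by rw [conjTranspose_sylvester, hA.isHermitian.eq]
    _ = sylvester A A (-X) := by rw [hX, hC, map_neg, hX]
  exact ⟨X, ⟨skew, hX⟩, fun Y hY ↦ bij.injective (hY.2.trans hX.symm)⟩

end Sylvester

theorem posDef_conjTranspose_mul_self_add_one {n p R : Type*} [Fintype n] [Finite p] [DecidableEq p]
    [Ring R] [PartialOrder R] [StarRing R] [StarOrderedRing R] [NoZeroDivisors R]
    (N : Matrix n p R) : (Nᴴ * N + 1).PosDef :=
  .posSemidef_add (posSemidef_conjTranspose_mul_self N) .one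

section Horizontal

variable {m n p R : Type*} [Fintype m] [Fintype n] [Fintype p] [Ring R] [StarRing R]

/-- The pair `(dM, dN)` is a horizontal vector at `(M, N)`: the first condition is tangency of `dM`
to the Stiefel manifold at `M`, the second is, over `ℝ`, orthogonality to the vertical vectors
`(M * Ω, N * Ω)` with `Ω` skew. Conjugate transposes make the notion available over star rings. -/
def IsHorizontal_s19 (M : Matrix m p R) (N : Matrix n p R) (dM : Matrix m p R) (dN : Matrix n p R) :
    Prop :=
  (Mᴴ * dM)ᴴ = -(Mᴴ * dM) ∧ (Mᴴ * dM + Nᴴ * dN)ᴴ = Mᴴ * dM + Nᴴ * dN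

theorem isHermitian_add_vertical_iff (M : Matrix m p R) (N : Matrix n p R) (dM : Matrix m p R)
    (dN : Matrix n p R) {Ω : Matrix p p R} (hΩ : Ωᴴ = -Ω) :
    (Mᴴ * (dM + M * Ω) + Nᴴ * (dN + N * Ω)).IsHermitian ↔
      (Nᴴ * N + Mᴴ * M) * Ω + Ω * (Nᴴ * N + Mᴴ * M) =
        dMᴴ * M - Mᴴ * dM + dNᴴ * N - Nᴴ * dN := by
  set S := Mᴴ * (dM + M * Ω) + Nᴴ * (dN + N * Ω) with hS
  have sub_conjTranspose : S - Sᴴ = (Nᴴ * N + Mᴴ * M) * Ω + Ω * (Nᴴ * N + Mᴴ * M) -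
      (dMᴴ * M - Mᴴ * dM + dNᴴ * N - Nᴴ * dN) := by
    simp only [hS, conjTranspose_add, conjTranspose_mul, conjTranspose_conjTranspose, hΩ,
      Matrix.mul_add, Matrix.add_mul, Matrix.neg_mul, Matrix.mul_assoc]
    abel
  rw [IsHermitian, eq_comm, ← sub_eq_zero, sub_conjTranspose, sub_eq_zero]

theorem isHorizontal_add_vertical_iff [DecidableEq p] {M : Matrix m p R} (hM : Mᴴ * M = 1)
    (N : Matrix n p R) {dM : Matrix m p R} (htang : Mᴴ * dM + dMᴴ * M = 0) (dN : Matrix n p R)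
    {Ω : Matrix p p R} (hΩ : Ωᴴ = -Ω) :
    IsHorizontal_s19 M N (dM + M * Ω) (dN + N * Ω) ↔
      (Nᴴ * N + 1) * Ω + Ω * (Nᴴ * N + 1) = dMᴴ * M - Mᴴ * dM + dNᴴ * N - Nᴴ * dN := by
  have skew : (Mᴴ * (dM + M * Ω))ᴴ = -(Mᴴ * (dM + M * Ω)) := by
    rw [Matrix.mul_add, ← Matrix.mul_assoc, hM, Matrix.one_mul, conjTranspose_add,
      conjTranspose_mul, conjTranspose_conjTranspose, hΩ, eq_neg_of_add_eq_zero_right htang,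
      neg_add]
  rw [← hM, ← isHermitian_add_vertical_iff M N dM dN hΩ]
  exact and_iff_right skew

end Horizontal

theorem horizontal_projection_orthonormal_general {m n p K : Type*} [Fintype m] [Fintype n]
    [Fintype p] [DecidableEq p] [Field K] [PartialOrder K] [StarRing K] [StarOrderedRing K]
    {M : Matrix m p K} (hM : Mᴴ * M = 1) (N : Matrix n p K)
    {dM : Matrix m p K} (htang : Mᴴ * dM + dMᴴ * M = 0) (dN : Matrix n p K) :
    (∃! Ω : Matrix p p K, Ωᴴ = -Ω ∧
        (Nᴴ * N + 1) * Ω + Ω * (Nᴴ * N + 1) =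
          dMᴴ * M - Mᴴ * dM + dNᴴ * N - Nᴴ * dN) ∧
    ∀ Ω : Matrix p p K, Ωᴴ = -Ω →
      (IsHorizontal_s19 M N (dM + M * Ω) (dN + N * Ω) ↔
        (Nᴴ * N + 1) * Ω + Ω * (Nᴴ * N + 1) =
          dMᴴ * M - Mᴴ * dM + dNᴴ * N - Nᴴ * dN) := by
  have rhs_skew : (dMᴴ * M - Mᴴ * dM + dNᴴ * N - Nᴴ * dN)ᴴ =
      -(dMᴴ * M - Mᴴ * dM + dNᴴ * N - Nᴴ * dN) := by
    simp only [conjTranspose_add, conjTranspose_sub, conjTranspose_mul, conjTranspose_conjTranspose]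
    abel
  exact ⟨existsUnique_skewHermitian_sylvester_eq (posDef_conjTranspose_mul_self_add_one N) rhs_skew,
    fun _ hΩ ↦ isHorizontal_add_vertical_iff hM N htang dN hΩ⟩

/-- Horizontal projection in the orthonormal-factor geometry: there is a unique
skew-symmetric Ω solving (NᵀN + I)Ω + Ω(NᵀN + I) = ṀᵀM − MᵀṀ + ṄᵀN − NᵀṄ, and the
resulting pair (Ṁ + MΩ, Ṅ + NΩ) is horizontal. -/
theorem horizontal_projection_orthonormal (m n p : ℕ)
    (hp : 0 < p) (hpm : p ≤ m) (hpn : p ≤ n)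
    (M : Matrix (Fin m) (Fin p) ℝ) (N : Matrix (Fin n) (Fin p) ℝ)
    (hM : Mᵀ * M = 1) (hN : N.rank = p)
    (dM : Matrix (Fin m) (Fin p) ℝ) (dN : Matrix (Fin n) (Fin p) ℝ)
    (htang : Mᵀ * dM + dMᵀ * M = 0) :
    (∃! Ω : Matrix (Fin p) (Fin p) ℝ, Ωᵀ = -Ω ∧
        (Nᵀ * N + 1) * Ω + Ω * (Nᵀ * N + 1) =
          dMᵀ * M - Mᵀ * dM + dNᵀ * N - Nᵀ * dN) ∧
    ∀ Ω : Matrix (Fin p) (Fin p) ℝ, Ωᵀ = -Ω →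
      (Nᵀ * N + 1) * Ω + Ω * (Nᵀ * N + 1) =
          dMᵀ * M - Mᵀ * dM + dNᵀ * N - Nᵀ * dN →
      (Mᵀ * (dM + M * Ω))ᵀ = -(Mᵀ * (dM + M * Ω)) ∧
      (Mᵀ * (dM + M * Ω) + Nᵀ * (dN + N * Ω))ᵀ =
        Mᵀ * (dM + M * Ω) + Nᵀ * (dN + N * Ω) := by
  simp only [← conjTranspose_eq_transpose_of_trivial] at hM htang ⊢
  obtain ⟨unique, horizontal_iff⟩ := horizontal_projection_orthonormal_general hM N htang dN
  exact ⟨unique, fun Ω hΩ hsylv ↦ (horizontal_iff Ω hΩ).mpr hsylv⟩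
end
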